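/- arXiv:0903.1436 — 2 statements merged into one kernel-verified Lean document; each statement's English description precedes it below -/
import Mathlib

section
/- Let n ≥ 1 and let m be a positive integer with m > (n+2)/4. Then there exists a constant C = C(m,n) > 0 such that for every Schwartz function u on ℝ^{n+1}, ‖u‖_{L^∞(ℝ^{n+1})} ≤ C (1 + ‖u‖_{BMOₚ(ℝ^{n+1})} (1 + log⁺ ‖u‖_{W₂^{2m,m}(ℝ^{n+1})})). -/
open MeasureTheory Real
open scoped FourierTransform ENNReal

noncomputable section

/-- The model space for `ℝ^{n+1}`: generic point `z = (x, t)` where the spatial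
coordinates are `x i = z i.castSucc` (`i : Fin n`) and the time coordinate is
`t = z (Fin.last n)`. -/
abbrev PSpace (n : ℕ) := EuclideanSpace ℝ (Fin (n + 1))

/-- The parabolic distance `‖z‖ₚ = max (maxᵢ |xᵢ|) √|t|` from `z` to the origin. -/
def pnorm {n : ℕ} (z : PSpace n) : ℝ :=
  max (⨆ i : Fin n, |z i.castSucc|) (Real.sqrt |z (Fin.last n)|)

/-- The parabolic cube of radius `r` centered at `z₀`. -/
def pCube {n : ℕ} (z₀ : PSpace n) (r : ℝ) : Set (PSpace n) :=
  {z | pnorm (z - z₀) < r}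

/-- The set of mean oscillations `⨍_Q |u - u_Q|` of `u` over parabolic cubes `Q ⊆ O`. -/
def oscSet {n : ℕ} (O : Set (PSpace n)) (u : PSpace n → ℝ) : Set ℝ :=
  {v | ∃ z₀ r, 0 < r ∧ pCube z₀ r ⊆ O ∧
    v = ⨍ z in pCube z₀ r, |u z - ⨍ w in pCube z₀ r, u w|}

/-- The parabolic BMO norm of `u` over `O`. -/
def pBMO {n : ℕ} (O : Set (PSpace n)) (u : PSpace n → ℝ) : ℝ := sSup (oscSet O u)

/-- The set of quantities `inf_c ⨍_Q |u - c|` over parabolic cubes `Q ⊆ O`. -/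
def infOscSet {n : ℕ} (O : Set (PSpace n)) (u : PSpace n → ℝ) : Set ℝ :=
  {v | ∃ z₀ r, 0 < r ∧ pCube z₀ r ⊆ O ∧
    v = ⨅ c : ℝ, ⨍ z in pCube z₀ r, |u z - c|}

/-- Time derivative `D_t u`. -/
def Dt {n : ℕ} (u : PSpace n → ℝ) : PSpace n → ℝ :=
  fun z => fderiv ℝ u z (EuclideanSpace.single (Fin.last n) 1)

/-- Spatial derivative in direction `i`. -/
def Dx {n : ℕ} (i : Fin n) (u : PSpace n → ℝ) : PSpace n → ℝ :=
  fun z => fderiv ℝ u z (EuclideanSpace.single i.castSucc 1)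

/-- Spatial derivative `D_x^α` for a multi-index `α`. -/
def DxPow {n : ℕ} (α : Fin n → ℕ) (u : PSpace n → ℝ) : PSpace n → ℝ :=
  (List.finRange n).foldr (fun i v => (Dx i)^[α i] v) u

/-- The mixed derivative `D_t^r D_x^α u`. -/
def mixDeriv {n : ℕ} (r : ℕ) (α : Fin n → ℕ) (u : PSpace n → ℝ) : PSpace n → ℝ :=
  Dt^[r] (DxPow α u)

/-- The `L²(O)` norm. -/
def L2norm {n : ℕ} (O : Set (PSpace n)) (v : PSpace n → ℝ) : ℝ :=
  (eLpNorm v 2 (volume.restrict O)).toReal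

/-- The parabolic Sobolev norm `‖u‖_{W₂^{2m,m}(O)} = Σ_{2r+s ≤ 2m} Σ_{|α| = s}
‖D_t^r D_x^α u‖_{L²(O)}`. -/
def sobNorm {n : ℕ} (m : ℕ) (O : Set (PSpace n)) (u : PSpace n → ℝ) : ℝ :=
  ∑ p ∈ (Finset.range (2 * m + 1) ×ˢ Finset.range (2 * m + 1)).filter
      (fun p => 2 * p.1 + p.2 ≤ 2 * m),
    ∑ α ∈ Finset.Nat.antidiagonalTuple n p.2, L2norm O (mixDeriv p.1 α u)

/-- `log⁺ x = max (log x) 0`. -/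
def logPlus (x : ℝ) : ℝ := max (Real.log x) 0

/-- The domain `Ω_T = (0,1)ⁿ × (0,T)`. -/
def OmegaT (n : ℕ) (T : ℝ) : Set (PSpace n) :=
  {z | (∀ i : Fin n, z i.castSucc ∈ Set.Ioo (0 : ℝ) 1) ∧ z (Fin.last n) ∈ Set.Ioo 0 T}

/-- The anisotropic dilation `η^a z = (η x, η² t)` with `a = (1,…,1,2)`. -/
def pdil {n : ℕ} (η : ℝ) (z : PSpace n) : PSpace n :=
  (EuclideanSpace.equiv (Fin (n + 1)) ℝ).symm
    (fun i => if i = Fin.last n then η ^ 2 * z i else η * z i)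

/-- The anisotropic dyadic partition of unity `ψ_j` built from `ψ₀`:
`ψ_j z = ψ₀ (2^{-ja} z) - ψ₀ (2^{-(j-1)a} z)` for `j ≥ 1`. -/
def psiJ {n : ℕ} (ψ₀ : PSpace n → ℝ) : ℕ → PSpace n → ℝ
  | 0 => ψ₀
  | (j + 1) => fun z =>
      ψ₀ (pdil ((2 : ℝ) ^ (-((j : ℝ) + 1))) z) - ψ₀ (pdil ((2 : ℝ) ^ (-(j : ℝ))) z)

/-- `φ_j = 𝓕⁻¹ ψ_j`, the inverse Fourier transform of `ψ_j`. -/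
def phiJ {n : ℕ} (ψ₀ : PSpace n → ℝ) (j : ℕ) : PSpace n → ℂ :=
  𝓕⁻ (fun z => ((psiJ ψ₀ j z : ℝ) : ℂ))

/-- The convolution `(φ * u) z = ∫ φ (z - w) u w dw`. -/
def pconv {n : ℕ} (φ : PSpace n → ℂ) (u : PSpace n → ℝ) (z : PSpace n) : ℂ :=
  ∫ w, φ (z - w) * (u w : ℂ)

/-- The truncated Lizorkin–Triebel norm `‖u‖_{F̃⁰_{∞,1}} = ‖Σ_{j≥1} |φ_j * u|‖_∞`. -/
def F01norm {n : ℕ} (ψ₀ : PSpace n → ℝ) (u : PSpace n → ℝ) : ℝ :=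
  ⨆ z, ∑' j : ℕ, ‖pconv (phiJ ψ₀ (j + 1)) u z‖

/-- The truncated Lizorkin–Triebel norm `‖u‖_{F̃⁰_{∞,2}} = ‖(Σ_{j≥1} |φ_j * u|²)^{1/2}‖_∞`. -/
def F02norm {n : ℕ} (ψ₀ : PSpace n → ℝ) (u : PSpace n → ℝ) : ℝ :=
  ⨆ z, Real.sqrt (∑' j : ℕ, ‖pconv (phiJ ψ₀ (j + 1)) u z‖ ^ 2)

/-- The Lizorkin–Triebel norm `‖u‖_{F^γ_{∞,2}} = ‖(Σ_{j≥0} 2^{2γj} |φ_j * u|²)^{1/2}‖_∞`. -/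
def Fg2norm {n : ℕ} (ψ₀ : PSpace n → ℝ) (γ : ℝ) (u : PSpace n → ℝ) : ℝ :=
  ⨆ z, Real.sqrt (∑' j : ℕ, (2 : ℝ) ^ (2 * γ * j) * ‖pconv (phiJ ψ₀ j) u z‖ ^ 2)

/-- The anisotropic Besov quasi-norm `‖u‖_{B^s_{p,q}}`. -/
def besovNorm {n : ℕ} (ψ₀ : PSpace n → ℝ) (s : ℝ) (p q : ℝ≥0∞) (u : PSpace n → ℝ) : ℝ :=
  if q = ∞ then ⨆ j : ℕ, (2 : ℝ) ^ (s * j) * (eLpNorm (pconv (phiJ ψ₀ j) u) p volume).toReal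
  else (∑' j : ℕ, ((2 : ℝ) ^ (s * j) *
    (eLpNorm (pconv (phiJ ψ₀ j) u) p volume).toReal) ^ q.toReal) ^ (1 / q.toReal)

/-- The standing hypotheses on the cut-off function `ψ₀`: smooth, compactly supported,
equal to `1` on `{‖z‖ₚ ≤ 1}` and to `0` on `{‖z‖ₚ ≥ 2}`. -/
structure IsCutoff {n : ℕ} (ψ₀ : PSpace n → ℝ) : Prop where
  smooth : ContDiff ℝ (⊤ : ℕ∞) ψ₀
  compact_support : HasCompactSupport ψ₀
  eq_one : ∀ z, pnorm z ≤ 1 → ψ₀ z = 1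
  eq_zero : ∀ z, 2 ≤ pnorm z → ψ₀ z = 0

section helpers
open SchwartzMap LineDeriv

/-- Exponents: `2m` in space, `m` in time. -/
def hExp (n m : ℕ) (i : Fin (n + 1)) : ℕ := if i = Fin.last n then m else 2 * m

lemma h_fourier_iter {n : ℕ} (v : PSpace n) (k : ℕ) (f : SchwartzMap (PSpace n) ℂ) (ξ : PSpace n) :
    ‖𝓕 ((fun g : SchwartzMap (PSpace n) ℂ => ∂_{v} g)^[k] f) ξ‖
      = (2 * π * |inner ℝ ξ v|) ^ k * ‖𝓕 f ξ‖ := by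
  induction k generalizing f with
  | zero => simp
  | succ k ih =>
    rw [Function.iterate_succ_apply, ih, fourier_lineDerivOp_eq]
    have : (inner ℝ · v : PSpace n → ℝ).HasTemperateGrowth := by fun_prop
    rw [_root_.smul_apply, smulLeftCLM_apply_apply this, norm_smul, norm_smul]
    simp [abs_of_pos Real.pi_pos]
    ring

lemma h_postcomp_iter {n : ℕ} (v : PSpace n) (k : ℕ) (u : SchwartzMap (PSpace n) ℝ) :
    (fun g : SchwartzMap (PSpace n) ℂ => ∂_{v} g)^[k] (u.postcompCLM Complex.ofRealCLM)
      = ((fun g : SchwartzMap (PSpace n) ℝ => ∂_{v} g)^[k] u).postcompCLM Complex.ofRealCLM := by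
  induction k generalizing u with
  | zero => simp
  | succ k ih =>
    rw [Function.iterate_succ_apply, Function.iterate_succ_apply, ← ih]
    congr 1
    ext x
    rw [lineDerivOp_apply_eq_fderiv, postcompCLM_apply, lineDerivOp_apply_eq_fderiv]
    have h : HasFDerivAt (⇑(u.postcompCLM Complex.ofRealCLM))
        (Complex.ofRealCLM.comp (fderiv ℝ u x)) x :=
      (Complex.ofRealCLM.hasFDerivAt).comp x (u.hasFDerivAt x)
    rw [h.fderiv]; rfl

lemma h_Dt_iter {n : ℕ} (k : ℕ) (u : SchwartzMap (PSpace n) ℝ) :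
    Dt^[k] ⇑u = ⇑((fun g : SchwartzMap (PSpace n) ℝ =>
      ∂_{(EuclideanSpace.single (Fin.last n) 1 : PSpace n)} g)^[k] u) := by
  induction k generalizing u with
  | zero => simp
  | succ k ih =>
    rw [Function.iterate_succ_apply, Function.iterate_succ_apply, ← ih]
    rfl

lemma h_Dx_iter {n : ℕ} (i : Fin n) (k : ℕ) (u : SchwartzMap (PSpace n) ℝ) :
    (Dx i)^[k] ⇑u = ⇑((fun g : SchwartzMap (PSpace n) ℝ =>
      ∂_{(EuclideanSpace.single i.castSucc 1 : PSpace n)} g)^[k] u) := by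
  induction k generalizing u with
  | zero => simp
  | succ k ih =>
    rw [Function.iterate_succ_apply, Function.iterate_succ_apply, ← ih]
    rfl

lemma h_DxPow_zero {n : ℕ} (u : PSpace n → ℝ) : DxPow 0 u = u := by
  unfold DxPow
  generalize List.finRange n = l
  induction l with
  | nil => rfl
  | cons a l ih => simpa using ih

lemma h_foldr_single {n : ℕ} (i : Fin n) (k : ℕ) (u : PSpace n → ℝ) (l : List (Fin n))
    (hl : l.Nodup) :
    l.foldr (fun j v => (Dx j)^[(Pi.single i k : Fin n → ℕ) j] v) u
      = if i ∈ l then (Dx i)^[k] u else u := by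
  induction l with
  | nil => simp
  | cons a l ih =>
    rw [List.nodup_cons] at hl
    rw [List.foldr_cons, ih hl.2]
    by_cases h : a = i
    · subst h; simp [hl.1]
    · have h' : i ≠ a := fun e => h e.symm
      simp [Pi.single_eq_of_ne h, h']

lemma h_DxPow_single {n : ℕ} (i : Fin n) (k : ℕ) (u : PSpace n → ℝ) :
    DxPow (Pi.single i k) u = (Dx i)^[k] u := by
  unfold DxPow
  rw [h_foldr_single i k u _ (List.nodup_finRange n)]
  simp

lemma h_sob_nonneg {n : ℕ} (m : ℕ) (u : PSpace n → ℝ) : 0 ≤ sobNorm m Set.univ u :=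
  Finset.sum_nonneg fun _ _ => Finset.sum_nonneg fun _ _ => ENNReal.toReal_nonneg

lemma h_sob_term {n : ℕ} (m r s : ℕ) (α : Fin n → ℕ) (u : PSpace n → ℝ)
    (hrs : 2 * r + s ≤ 2 * m) (hα : ∑ i, α i = s) :
    L2norm Set.univ (mixDeriv r α u) ≤ sobNorm m Set.univ u := by
  unfold sobNorm
  have h1 : L2norm Set.univ (mixDeriv r α u) ≤ ∑ α ∈ Finset.Nat.antidiagonalTuple n s,
      L2norm Set.univ (mixDeriv r α u) :=
    Finset.single_le_sum (f := fun α => L2norm Set.univ (mixDeriv r α u))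
      (fun _ _ => ENNReal.toReal_nonneg) (Finset.Nat.mem_antidiagonalTuple.2 hα)
  refine h1.trans ?_
  exact Finset.single_le_sum (f := fun p : ℕ × ℕ => ∑ α ∈ Finset.Nat.antidiagonalTuple n p.2,
      L2norm Set.univ (mixDeriv p.1 α u)) (a := (r, s))
      (fun _ _ => Finset.sum_nonneg fun _ _ => ENNReal.toReal_nonneg)
      (by simp; omega)

lemma h_L2 {n : ℕ} (v : SchwartzMap (PSpace n) ℝ) :
    ∫ x, |v x| ^ 2 = L2norm Set.univ ⇑v ^ 2 := by
  unfold L2norm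
  rw [Measure.restrict_univ, MemLp.eLpNorm_eq_integral_rpow_norm (by simp) (by simp) (v.memLp 2 volume),
    ENNReal.toReal_ofReal (by positivity), ← Real.rpow_natCast, ← Real.rpow_mul
    (integral_nonneg fun _ => by positivity)]
  simp

/-- pure derivative bound -/
lemma h_pure {n : ℕ} (m : ℕ) (i : Fin (n + 1)) (u : SchwartzMap (PSpace n) ℝ) :
    L2norm Set.univ ⇑((fun g : SchwartzMap (PSpace n) ℝ =>
      ∂_{(EuclideanSpace.single i 1 : PSpace n)} g)^[hExp n m i] u) ≤ sobNorm m Set.univ ⇑u := by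
  induction i using Fin.lastCases with
  | last =>
    have := h_sob_term m m 0 (0 : Fin n → ℕ) (⇑u) (by omega) (by simp)
    unfold mixDeriv at this
    rw [h_DxPow_zero, h_Dt_iter] at this
    simpa [hExp] using this
  | cast i =>
    have := h_sob_term m 0 (2 * m) (Pi.single i (2 * m)) (⇑u) (by omega) (by simp)
    unfold mixDeriv at this
    rw [h_DxPow_single, h_Dx_iter] at this
    simpa [hExp, (Fin.castSucc_lt_last i).ne] using this

lemma h_zero_order {n : ℕ} (m : ℕ) (u : SchwartzMap (PSpace n) ℝ) :
    L2norm Set.univ ⇑u ≤ sobNorm m Set.univ ⇑u := by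
  have := h_sob_term m 0 0 (0 : Fin n → ℕ) (⇑u) (by omega) (by simp)
  unfold mixDeriv at this
  rw [h_DxPow_zero] at this
  simpa using this

lemma h_int_sq {n : ℕ} (f : SchwartzMap (PSpace n) ℂ) : Integrable (fun x => ‖f x‖ ^ 2) :=
  (memLp_two_iff_integrable_sq_norm f.continuous.aestronglyMeasurable).1 (f.memLp 2)

lemma h_fourier_weight {n : ℕ} (i : Fin (n + 1)) (k : ℕ) (u : SchwartzMap (PSpace n) ℝ) :
    Integrable (fun ξ : PSpace n => |ξ i| ^ (2 * k) *
      ‖𝓕 (u.postcompCLM Complex.ofRealCLM : SchwartzMap (PSpace n) ℂ) ξ‖ ^ 2) ∧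
    ∫ ξ : PSpace n, |ξ i| ^ (2 * k) *
      ‖𝓕 (u.postcompCLM Complex.ofRealCLM : SchwartzMap (PSpace n) ℂ) ξ‖ ^ 2
      ≤ L2norm Set.univ ⇑((fun g : SchwartzMap (PSpace n) ℝ =>
      ∂_{(EuclideanSpace.single i 1 : PSpace n)} g)^[k] u) ^ 2 := by
  set v : PSpace n := EuclideanSpace.single i 1
  set f : SchwartzMap (PSpace n) ℂ := u.postcompCLM Complex.ofRealCLM
  have hI := h_int_sq (𝓕 ((fun g : SchwartzMap (PSpace n) ℂ => ∂_{v} g)^[k] f))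
  have hP := integral_norm_sq_fourier ((fun g : SchwartzMap (PSpace n) ℂ => ∂_{v} g)^[k] f)
  have hle : ∀ ξ : PSpace n, |ξ i| ^ (2 * k) * ‖𝓕 f ξ‖ ^ 2
      ≤ ‖𝓕 ((fun g : SchwartzMap (PSpace n) ℂ => ∂_{v} g)^[k] f) ξ‖ ^ 2 := by
    intro ξ
    rw [h_fourier_iter, mul_pow, ← pow_mul, mul_comm k 2]
    have : inner ℝ ξ v = ξ i := by simp [v, EuclideanSpace.inner_single_right]
    rw [this]
    gcongr
    have : (1 : ℝ) ≤ 2 * π := by linarith [Real.pi_gt_three]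
    nlinarith [abs_nonneg (ξ i)]
  have hI2 : Integrable (fun ξ : PSpace n => |ξ i| ^ (2 * k) * ‖𝓕 f ξ‖ ^ 2) := by
    refine hI.mono' ?_ (Filter.Eventually.of_forall fun ξ => ?_)
    · have := (𝓕 f).continuous
      exact (by fun_prop : Continuous _).aestronglyMeasurable
    · rw [Real.norm_of_nonneg (by positivity)]
      exact hle ξ
  refine ⟨hI2, ?_⟩
  refine (integral_mono hI2 hI hle).trans ?_
  rw [hP, h_postcomp_iter, ← h_L2]
  simp

/-- The symbol `P`. -/
def hP (n m : ℕ) (ξ : PSpace n) : ℝ := 1 + ∑ i, |ξ i| ^ hExp n m i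

lemma h_hP_one {n m : ℕ} (ξ : PSpace n) : 1 ≤ hP n m ξ := by
  unfold hP
  have : 0 ≤ ∑ i, |ξ i| ^ hExp n m i := Finset.sum_nonneg fun _ _ => by positivity
  linarith

lemma h_hExp_pos {n m : ℕ} (hm : 0 < m) (i : Fin (n + 1)) : 0 < hExp n m i := by
  unfold hExp; split_ifs <;> omega

lemma h_m_le_hExp {n m : ℕ} (i : Fin (n + 1)) : m ≤ hExp n m i := by
  unfold hExp; split_ifs <;> omega

lemma h_coord {n m : ℕ} (hm : 0 < m) (ξ : PSpace n) (i : Fin (n + 1)) :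
    1 + |ξ i| ≤ 2 * hP n m ξ ^ (1 / (hExp n m i : ℝ)) := by
  have hk := h_hExp_pos (n := n) hm i
  have hP1 := h_hP_one (m := m) ξ
  have h1 : (1 : ℝ) ≤ hP n m ξ ^ (1 / (hExp n m i : ℝ)) :=
    Real.one_le_rpow hP1 (by positivity)
  have h2 : |ξ i| ≤ hP n m ξ ^ (1 / (hExp n m i : ℝ)) := by
    have h3 : |ξ i| ^ hExp n m i ≤ hP n m ξ := by
      have : |ξ i| ^ hExp n m i ≤ ∑ i, |ξ i| ^ hExp n m i :=
        Finset.single_le_sum (f := fun i => |ξ i| ^ hExp n m i) (fun _ _ => by positivity)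
          (Finset.mem_univ i)
      unfold hP; linarith
    calc |ξ i| = (|ξ i| ^ hExp n m i) ^ (1 / (hExp n m i : ℝ)) := by
          rw [one_div, Real.pow_rpow_inv_natCast (abs_nonneg _) hk.ne']
      _ ≤ _ := Real.rpow_le_rpow (by positivity) h3 (by positivity)
  linarith

lemma h_norm_le_sum {n : ℕ} (ξ : PSpace n) : ‖ξ‖ ≤ ∑ i, |ξ i| := by
  rw [EuclideanSpace.norm_eq]
  refine Real.sqrt_le_iff.2 ⟨Finset.sum_nonneg fun _ _ => abs_nonneg _, ?_⟩
  simp only [Real.norm_eq_abs]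
  exact Finset.sum_sq_le_sq_sum_of_nonneg (fun _ _ => abs_nonneg _)

lemma h_norm_hP {n m : ℕ} (hm : 0 < m) (ξ : PSpace n) :
    ‖ξ‖ ≤ (2 * (n + 1)) * hP n m ξ ^ (1 / (m : ℝ)) := by
  refine (h_norm_le_sum ξ).trans ?_
  have : ∀ i ∈ Finset.univ, |ξ i| ≤ 2 * hP n m ξ ^ (1 / (m : ℝ)) := by
    intro i _
    have h1 := h_coord hm ξ i
    have h2 : hP n m ξ ^ (1 / (hExp n m i : ℝ)) ≤ hP n m ξ ^ (1 / (m : ℝ)) := by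
      refine Real.rpow_le_rpow_of_exponent_le (h_hP_one ξ) ?_
      have : (m : ℝ) ≤ hExp n m i := by exact_mod_cast h_m_le_hExp i
      have hm' : (0 : ℝ) < m := by exact_mod_cast hm
      exact one_div_le_one_div_of_le hm' this
    linarith
  refine (Finset.sum_le_sum this).trans (le_of_eq ?_)
  simp; ring

lemma h_sum_inv (n m : ℕ) (hm : 0 < m) :
    ∑ i, 1 / (hExp n m i : ℝ) = (n + 2) / (2 * m) := by
  rw [Fin.sum_univ_castSucc]
  have : ∀ i : Fin n, 1 / (hExp n m i.castSucc : ℝ) = 1 / (2 * m) := by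
    intro i; simp [hExp, (Fin.castSucc_lt_last i).ne]
  simp only [this]
  have hm' : (0 : ℝ) < m := by exact_mod_cast hm
  simp [hExp]
  field_simp

/-- The integrable majorant. -/
def hH (n : ℕ) (s : ℝ) (ξ : PSpace n) : ℝ := ∏ i, (1 + |ξ i|) ^ (-s)

lemma h_hH_pos {n : ℕ} (s : ℝ) (ξ : PSpace n) : 0 < hH n s ξ :=
  Finset.prod_pos fun i _ => Real.rpow_pos_of_pos (by positivity) _

lemma h_hH_int (n : ℕ) {s : ℝ} (hs : 1 < s) : Integrable (hH n s) := by
  have h1 : Integrable (fun x : ℝ => (1 + |x|) ^ (-s)) := by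
    have := integrable_one_add_norm (E := ℝ) (μ := volume) (r := s) (by simpa using hs)
    simpa using this
  have h2 := Integrable.fintype_prod (ι := Fin (n + 1)) (f := fun _ (x : ℝ) => (1 + |x|) ^ (-s))
    (μ := fun _ => volume) (fun _ => h1)
  have h3 := (EuclideanSpace.volume_preserving_symm_measurableEquiv_toLp
    (Fin (n + 1))).integrable_comp_of_integrable h2
  exact h3

lemma h_key {n m : ℕ} (hm : 0 < m) (s : ℝ) (hs0 : 0 ≤ s)
    (hs : s * ((n + 2) / (2 * m)) + (1 / 4) * (1 / m) = 2) :
    ∃ C : ℝ, 0 ≤ C ∧ ∀ ξ : PSpace n, (‖ξ‖ ^ (1 / 8 : ℝ)) ^ 2 / hP n m ξ ^ 2 ≤ C * hH n s ξ := by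
  refine ⟨(∏ _i : Fin (n + 1), (2 : ℝ) ^ s) * (2 * (n + 1)) ^ (1 / 4 : ℝ), by positivity, ?_⟩
  intro ξ
  have hP1 := h_hP_one (m := m) ξ
  have hP0 : 0 < hP n m ξ := by linarith
  set P := hP n m ξ with hPdef
  have e1 : (‖ξ‖ ^ (1 / 8 : ℝ)) ^ 2 = ‖ξ‖ ^ (1 / 4 : ℝ) := by
    rw [← Real.rpow_natCast, ← Real.rpow_mul (norm_nonneg _)]; norm_num
  have e2 : ‖ξ‖ ^ (1 / 4 : ℝ) ≤ (2 * (n + 1)) ^ (1 / 4 : ℝ) * P ^ ((1 / 4) * (1 / (m : ℝ))) := by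
    refine (Real.rpow_le_rpow (norm_nonneg _) (h_norm_hP hm ξ) (by norm_num)).trans (le_of_eq ?_)
    rw [Real.mul_rpow (by positivity) (by positivity), ← Real.rpow_mul hP0.le]
    ring_nf
  have e3 : ∏ i, (1 + |ξ i|) ^ s ≤ (∏ _i : Fin (n + 1), (2 : ℝ) ^ s) *
      P ^ (s * ((n + 2) / (2 * m))) := by
    rw [← h_sum_inv n m hm, Finset.mul_sum, Real.rpow_sum_of_pos hP0, ← Finset.prod_mul_distrib]
    refine Finset.prod_le_prod (fun i _ => by positivity) fun i _ => ?_
    refine (Real.rpow_le_rpow (by positivity) (h_coord hm ξ i) hs0).trans (le_of_eq ?_)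
    rw [Real.mul_rpow (by positivity) (by positivity), ← Real.rpow_mul hP0.le]
    ring_nf
  have e4 : hH n s ξ * ∏ i, (1 + |ξ i|) ^ s = 1 := by
    unfold hH
    rw [← Finset.prod_mul_distrib]
    refine Finset.prod_eq_one fun i _ => ?_
    rw [← Real.rpow_add (by positivity)]; simp
  have hH0 := h_hH_pos s ξ
  rw [e1, div_le_iff₀ (by positivity)]
  have e5 : P ^ 2 = P ^ (s * ((n + 2) / (2 * m))) * P ^ ((1 / 4) * (1 / (m : ℝ))) := by
    rw [← Real.rpow_add hP0, hs]; norm_num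
  rw [e5]
  calc ‖ξ‖ ^ (1 / 4 : ℝ) = hH n s ξ * ((∏ i, (1 + |ξ i|) ^ s) * ‖ξ‖ ^ (1 / 4 : ℝ)) := by
        rw [← mul_assoc, e4, one_mul]
    _ ≤ hH n s ξ * (((∏ _i : Fin (n + 1), (2 : ℝ) ^ s) *
      P ^ (s * ((n + 2) / (2 * m)))) * 
        ((2 * (n + 1)) ^ (1 / 4 : ℝ) * P ^ ((1 / 4) * (1 / (m : ℝ))))) := by
        refine mul_le_mul_of_nonneg_left ?_ hH0.le
        exact mul_le_mul e3 e2 (by positivity) (by positivity)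
    _ = _ := by ring

lemma h_P_sq {n m : ℕ} (ξ : PSpace n) :
    hP n m ξ ^ 2 ≤ (n + 2) * (1 + ∑ i, |ξ i| ^ (2 * hExp n m i)) := by
  have h := sq_sum_le_card_mul_sum_sq (s := (Finset.univ : Finset (Option (Fin (n + 1)))))
    (f := fun o => o.elim (1 : ℝ) (fun i => |ξ i| ^ hExp n m i))
  rw [Fintype.sum_option, Fintype.sum_option] at h
  simp only [Option.elim, Finset.card_univ, Fintype.card_option, Fintype.card_fin] at h
  unfold hP
  refine h.trans (le_of_eq ?_)
  push_cast
  simp only [← pow_mul]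
  simp only [mul_comm 2, one_pow]
  ring

lemma h_exp_diff (a b : ℝ) :
    ‖Complex.exp (a * Complex.I) - Complex.exp (b * Complex.I)‖ ≤ 2 * |a - b| ^ (1 / 8 : ℝ) := by
  have h1 : ‖Complex.exp (a * Complex.I) - Complex.exp (b * Complex.I)‖ ≤ |a - b| := by
    have e : Complex.exp (a * Complex.I) - Complex.exp (b * Complex.I)
        = Complex.exp (b * Complex.I) * (Complex.exp (Complex.I * ((a - b : ℝ) : ℂ)) - 1) := by
      rw [mul_sub, ← Complex.exp_add, mul_one]
      congr 2
      push_cast; ring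
    rw [e, norm_mul, Complex.norm_exp_ofReal_mul_I, one_mul]
    simpa using Real.norm_exp_I_mul_ofReal_sub_one_le (x := a - b)
  have h2 : ‖Complex.exp (a * Complex.I) - Complex.exp (b * Complex.I)‖ ≤ 2 := by
    refine (norm_sub_le _ _).trans ?_
    rw [Complex.norm_exp_ofReal_mul_I, Complex.norm_exp_ofReal_mul_I]; norm_num
  rcases le_total |a - b| 1 with h | h
  · have : |a - b| ≤ |a - b| ^ (1 / 8 : ℝ) := by
      have := Real.rpow_le_rpow_of_exponent_ge' (abs_nonneg (a - b)) h
        (by norm_num : (0 : ℝ) ≤ 1 / 8) (by norm_num : (1 / 8 : ℝ) ≤ 1)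
      simpa using this
    linarith [abs_nonneg (a - b)]
  · have := Real.one_le_rpow h (by norm_num : (0 : ℝ) ≤ 1 / 8)
    linarith

lemma h_holder (n m : ℕ) (hm : 0 < m) (hmn : ((n : ℝ) + 2) / 4 < m) :
    ∃ K : ℝ, 0 ≤ K ∧ ∀ (u : SchwartzMap (PSpace n) ℝ) (z w : PSpace n),
      |u z - u w| ≤ K * ‖z - w‖ ^ (1 / 8 : ℝ) * max 1 (sobNorm m Set.univ ⇑u) := by
  have hm' : (0 : ℝ) < m := by exact_mod_cast hm
  have hnat : n + 3 ≤ 4 * m := by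
    have h1 : (n : ℝ) + 2 < 4 * m := by linarith
    have h2 : n + 2 < 4 * m := by exact_mod_cast h1
    omega
  have hreal : (n : ℝ) + 3 ≤ 4 * m := by exact_mod_cast hnat
  set s : ℝ := (4 * m - 1 / 2) / (n + 2) with hs_def
  have hs1 : 1 < s := by rw [hs_def, lt_div_iff₀ (by positivity)]; linarith
  have hs : s * ((n + 2) / (2 * m)) + (1 / 4) * (1 / m) = 2 := by
    rw [hs_def]; field_simp; ring
  obtain ⟨C, hC0, hC⟩ := h_key (n := n) hm s (by linarith) hs
  set J := ∫ ξ, hH n s ξ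
  have hJ : 0 ≤ J := integral_nonneg fun ξ => (h_hH_pos s ξ).le
  refine ⟨2 * (2 * π) ^ (1 / 8 : ℝ) * (((n : ℝ) + 2) ^ 2 + C * J), by positivity, ?_⟩
  intro u z w
  set W := max 1 (sobNorm m Set.univ ⇑u) with hW
  have hW1 : 1 ≤ W := le_max_left _ _
  have hW2 : sobNorm m Set.univ ⇑u ≤ W := le_max_right _ _
  set f : SchwartzMap (PSpace n) ℂ := u.postcompCLM Complex.ofRealCLM with hf
  -- the weighted L² bound
  have hterm : ∀ i : Fin (n + 1), Integrable (fun ξ : PSpace n => |ξ i| ^ (2 * hExp n m i) *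
      ‖𝓕 f ξ‖ ^ 2) ∧ ∫ ξ : PSpace n, |ξ i| ^ (2 * hExp n m i) * ‖𝓕 f ξ‖ ^ 2 ≤ W ^ 2 := by
    intro i
    have h := h_fourier_weight i (hExp n m i) u
    refine ⟨h.1, h.2.trans ?_⟩
    exact pow_le_pow_left₀ ENNReal.toReal_nonneg ((h_pure m i u).trans hW2) 2
  have hzero : ∫ ξ : PSpace n, ‖𝓕 f ξ‖ ^ 2 ≤ W ^ 2 := by
    rw [integral_norm_sq_fourier f]
    have : ∫ x, ‖f x‖ ^ 2 = L2norm Set.univ ⇑u ^ 2 := by rw [← h_L2]; simp [hf]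
    rw [this]
    exact pow_le_pow_left₀ ENNReal.toReal_nonneg ((h_zero_order m u).trans hW2) 2
  have hGint : Integrable (fun ξ : PSpace n =>
      ‖𝓕 f ξ‖ ^ 2 + ∑ i, |ξ i| ^ (2 * hExp n m i) * ‖𝓕 f ξ‖ ^ 2) :=
    (h_int_sq _).add (integrable_finsetSum _ fun i _ => (hterm i).1)
  have hG : ∫ ξ : PSpace n,
      (‖𝓕 f ξ‖ ^ 2 + ∑ i, |ξ i| ^ (2 * hExp n m i) * ‖𝓕 f ξ‖ ^ 2) ≤ (n + 2) * W ^ 2 := by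
    rw [integral_add (h_int_sq _) (integrable_finsetSum _ fun i _ => (hterm i).1),
      integral_finsetSum _ fun i _ => (hterm i).1]
    have := Finset.sum_le_sum (s := Finset.univ) fun (i : Fin (n + 1)) _ => (hterm i).2
    simp at this
    linarith
  -- AM-GM
  have hpt : ∀ ξ : PSpace n, ‖ξ‖ ^ (1 / 8 : ℝ) * ‖𝓕 f ξ‖ ≤
      (n + 2) / W * (‖𝓕 f ξ‖ ^ 2 + ∑ i, |ξ i| ^ (2 * hExp n m i) * ‖𝓕 f ξ‖ ^ 2)
        + W * C * hH n s ξ := by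
    intro ξ
    have hP0 : 0 < hP n m ξ := lt_of_lt_of_le one_pos (h_hP_one ξ)
    set a := hP n m ξ * ‖𝓕 f ξ‖ with ha
    set b := ‖ξ‖ ^ (1 / 8 : ℝ) / hP n m ξ with hb
    have hab : ‖ξ‖ ^ (1 / 8 : ℝ) * ‖𝓕 f ξ‖ = a * b := by rw [ha, hb]; field_simp
    have hb2 : b ^ 2 ≤ C * hH n s ξ := by rw [hb, div_pow]; exact hC ξ
    have ha2 : a ^ 2 ≤ (n + 2) * (‖𝓕 f ξ‖ ^ 2 + ∑ i, |ξ i| ^ (2 * hExp n m i) * ‖𝓕 f ξ‖ ^ 2) := by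
      rw [ha, mul_pow, ← Finset.sum_mul]
      have := mul_le_mul_of_nonneg_right (h_P_sq (m := m) ξ) (sq_nonneg ‖𝓕 f ξ‖)
      refine this.trans (le_of_eq ?_); ring
    have ham : a * b ≤ a ^ 2 / W + W * b ^ 2 := by
      have h1 : 0 ≤ (a - W * b) ^ 2 / W := by positivity
      have h2 : (a - W * b) ^ 2 / W = a ^ 2 / W + W * b ^ 2 - 2 * (a * b) := by
        field_simp; ring
      have h3 : 0 ≤ a * b := by positivity
      linarith
    rw [hab]
    have h4 : a ^ 2 / W ≤ ((n + 2) * (‖𝓕 f ξ‖ ^ 2 +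
      ∑ i, |ξ i| ^ (2 * hExp n m i) * ‖𝓕 f ξ‖ ^ 2)) / W := by gcongr
    have h5 : W * b ^ 2 ≤ W * (C * hH n s ξ) := by gcongr
    calc a * b ≤ _ := ham
      _ ≤ _ := add_le_add h4 h5
      _ = _ := by ring
  have hRint := (hGint.const_mul ((n + 2) / W)).add ((h_hH_int n hs1).const_mul (W * C))
  have hLint : Integrable (fun ξ : PSpace n => ‖ξ‖ ^ (1 / 8 : ℝ) * ‖𝓕 f ξ‖) := by
    refine hRint.mono' ?_ (Filter.Eventually.of_forall fun ξ => ?_)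
    · have := (𝓕 f).continuous
      have h2 : Continuous (fun ξ : PSpace n => ‖ξ‖ ^ (1 / 8 : ℝ)) :=
        continuous_norm.rpow_const fun _ => Or.inr (by norm_num)
      exact (h2.mul this.norm).aestronglyMeasurable
    · rw [Real.norm_of_nonneg (by positivity)]
      exact hpt ξ
  have hL : ∫ ξ : PSpace n, ‖ξ‖ ^ (1 / 8 : ℝ) * ‖𝓕 f ξ‖ ≤ (((n : ℝ) + 2) ^ 2 + C * J) * W := by
    refine (integral_mono hLint hRint hpt).trans ?_
    rw [integral_add' (hGint.const_mul _) ((h_hH_int n hs1).const_mul _),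
      integral_const_mul, integral_const_mul]
    have : (n + 2) / W * ∫ ξ : PSpace n,
      (‖𝓕 f ξ‖ ^ 2 + ∑ i, |ξ i| ^ (2 * hExp n m i) * ‖𝓕 f ξ‖ ^ 2)
        ≤ (n + 2) / W * ((n + 2) * W ^ 2) := by gcongr
    refine (add_le_add_left this _).trans (le_of_eq ?_)
    field_simp
    ring
  -- inversion
  have hinv : ∀ x : PSpace n, f x = ∫ ξ : PSpace n,
      Complex.exp (((2 * π * inner ℝ ξ x : ℝ) : ℂ) * Complex.I) • 𝓕 f ξ := by
    intro x
    have h1 : f x = (𝓕⁻ (𝓕 f)) x := by rw [FourierPair.fourierInv_fourier_eq]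
    rw [h1, fourierInv_coe, Real.fourierInv_eq']
  have hEint : ∀ x : PSpace n, Integrable (fun ξ : PSpace n =>
      Complex.exp (((2 * π * inner ℝ ξ x : ℝ) : ℂ) * Complex.I) • 𝓕 f ξ) := by
    intro x
    refine (𝓕 f).integrable.norm.mono' ?_ (Filter.Eventually.of_forall fun ξ => ?_)
    · have := (𝓕 f).continuous
      exact (by fun_prop : Continuous _).aestronglyMeasurable
    · rw [norm_smul, Complex.norm_exp_ofReal_mul_I, one_mul]
  have hdiff : |u z - u w| = ‖f z - f w‖ := by
    have : f z - f w = ((u z - u w : ℝ) : ℂ) := by simp [hf]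
    rw [this, Complex.norm_real, Real.norm_eq_abs]
  rw [hdiff, hinv z, hinv w, ← integral_sub (hEint z) (hEint w)]
  have hbound : ∀ ξ : PSpace n,
      ‖Complex.exp (((2 * π * inner ℝ ξ z : ℝ) : ℂ) * Complex.I) • 𝓕 f ξ
        - Complex.exp (((2 * π * inner ℝ ξ w : ℝ) : ℂ) * Complex.I) • 𝓕 f ξ‖
      ≤ (2 * (2 * π) ^ (1 / 8 : ℝ) * ‖z - w‖ ^ (1 / 8 : ℝ)) * 
        (‖ξ‖ ^ (1 / 8 : ℝ) * ‖𝓕 f ξ‖) := by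
    intro ξ
    rw [← sub_smul, norm_smul]
    have h1 := h_exp_diff (2 * π * inner ℝ ξ z) (2 * π * inner ℝ ξ w)
    have h2 : |2 * π * inner ℝ ξ z - 2 * π * inner ℝ ξ w| ≤ 2 * π * (‖ξ‖ * ‖z - w‖) := by
      rw [← mul_sub, ← inner_sub_right, abs_mul, abs_of_pos (by positivity : 0 < 2 * π)]
      gcongr
      exact abs_real_inner_le_norm _ _
    have h3 := Real.rpow_le_rpow (abs_nonneg _) h2 (by norm_num : (0 : ℝ) ≤ 1 / 8)
    rw [Real.mul_rpow (x := 2 * π) (by positivity) (by positivity),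
      Real.mul_rpow (x := ‖ξ‖) (by positivity) (by positivity)] at h3
    calc _ ≤ (2 * ((2 * π) ^ (1 / 8 : ℝ) * (‖ξ‖ ^ (1 / 8 : ℝ) * ‖z - w‖ ^ (1 / 8 : ℝ)))) *
          ‖𝓕 f ξ‖ := by gcongr; linarith
      _ = _ := by ring
  refine (norm_integral_le_of_norm_le (hLint.const_mul _)
    (Filter.Eventually.of_forall hbound)).trans ?_
  rw [integral_const_mul]
  refine (mul_le_mul_of_nonneg_left hL (by positivity)).trans (le_of_eq ?_)
  ring

lemma h_mem_cube {n : ℕ} (hn : 1 ≤ n) (z₀ z : PSpace n) {r : ℝ} (hr : 0 < r) :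
    z ∈ pCube z₀ r ↔ ∀ i, |z i - z₀ i| < (if i = Fin.last n then r ^ 2 else r) := by
  have : Nonempty (Fin n) := ⟨⟨0, hn⟩⟩
  unfold pCube pnorm
  rw [Set.mem_ofPred_eq, max_lt_iff, Fin.forall_fin_succ', Real.sqrt_lt' hr]
  simp only [(Fin.castSucc_lt_last _).ne, if_true, if_false, PiLp.sub_apply]
  refine and_congr_left fun _ => ?_
  constructor
  · intro h i
    exact (le_ciSup (f := fun i : Fin n => |z i.castSucc - z₀ i.castSucc|)
      (Set.finite_range _).bddAbove i).trans_lt h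
  · intro h
    obtain ⟨i, hi⟩ := exists_eq_ciSup_of_finite (f := fun i : Fin n =>
      |z i.castSucc - z₀ i.castSucc|)
    rw [← hi]; exact h i

lemma h_cube_eq {n : ℕ} (hn : 1 ≤ n) (z₀ : PSpace n) {r : ℝ} (hr : 0 < r) :
    pCube z₀ r = (MeasurableEquiv.toLp 2 (Fin (n + 1) → ℝ)).symm ⁻¹'
      (Set.univ.pi fun i => Set.Ioo (z₀ i - (if i = Fin.last n then r ^ 2 else r))
        (z₀ i + (if i = Fin.last n then r ^ 2 else r))) := by
  ext z
  rw [h_mem_cube hn z₀ z hr]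
  simp only [Set.mem_preimage, Set.mem_pi, Set.mem_univ, true_imp_iff, Set.mem_Ioo]
  refine forall_congr' fun i => ?_
  rw [abs_lt]
  change _ ↔ _ < z i ∧ z i < _
  constructor <;> rintro ⟨h1, h2⟩ <;> constructor <;> linarith

lemma h_cube_meas {n : ℕ} (hn : 1 ≤ n) (z₀ : PSpace n) {r : ℝ} (hr : 0 < r) :
    MeasurableSet (pCube z₀ r) := by
  rw [h_cube_eq hn z₀ hr]
  exact (MeasurableEquiv.measurable _) (MeasurableSet.univ_pi fun _ => measurableSet_Ioo)

lemma h_cube_vol {n : ℕ} (hn : 1 ≤ n) (z₀ : PSpace n) {r : ℝ} (hr : 0 < r) :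
    volume (pCube z₀ r) = ENNReal.ofReal (2 ^ (n + 1) * r ^ (n + 2)) := by
  rw [h_cube_eq hn z₀ hr, (EuclideanSpace.volume_preserving_symm_measurableEquiv_toLp
    (Fin (n + 1))).measure_preimage
      (MeasurableSet.univ_pi fun _ => measurableSet_Ioo).nullMeasurableSet, Real.volume_pi_Ioo,
      ← ENNReal.ofReal_prod_of_nonneg]
  · congr 1
    rw [Fin.prod_univ_castSucc]
    simp only [(Fin.castSucc_lt_last _).ne, if_true, if_false]
    simp only [add_sub_sub_cancel, Finset.prod_const, Finset.card_univ, Fintype.card_fin]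
    ring
  · intro i _
    split_ifs <;> ring_nf <;> positivity

lemma h_cube_real {n : ℕ} (hn : 1 ≤ n) (z₀ : PSpace n) {r : ℝ} (hr : 0 < r) :
    volume.real (pCube z₀ r) = 2 ^ (n + 1) * r ^ (n + 2) := by
  rw [Measure.real, h_cube_vol hn z₀ hr, ENNReal.toReal_ofReal (by positivity)]

lemma h_avg_le {n : ℕ} (hn : 1 ≤ n) (z₀ : PSpace n) {r : ℝ} (hr : 0 < r) (f : PSpace n → ℝ)
    (M : ℝ) (hM : ∀ z ∈ pCube z₀ r, |f z| ≤ M) : |⨍ z in pCube z₀ r, f z| ≤ M := by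
  have hV : 0 < volume.real (pCube z₀ r) := by rw [h_cube_real hn z₀ hr]; positivity
  have hfin : volume (pCube z₀ r) < ⊤ := by rw [h_cube_vol hn z₀ hr]; exact ENNReal.ofReal_lt_top
  have h := norm_setIntegral_le_of_norm_le_const hfin (f := f) (C := M) hM
  rw [setAverage_eq, smul_eq_mul, abs_mul, abs_of_pos (inv_pos.2 hV), inv_mul_le_iff₀ hV]
  rw [Real.norm_eq_abs] at h
  linarith

lemma h_avg_sub {n : ℕ} (hn : 1 ≤ n) (z₀ : PSpace n) {r : ℝ} (hr : 0 < r)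
    (u : SchwartzMap (PSpace n) ℝ) (c : ℝ) :
    ⨍ z in pCube z₀ r, (u z - c) = (⨍ z in pCube z₀ r, u z) - c := by
  have hV : 0 < volume.real (pCube z₀ r) := by rw [h_cube_real hn z₀ hr]; positivity
  have hfin : volume (pCube z₀ r) ≠ ⊤ := by rw [h_cube_vol hn z₀ hr]; exact ENNReal.ofReal_ne_top
  rw [setAverage_eq, setAverage_eq, integral_sub u.integrable.integrableOn
    (integrableOn_const hfin), setIntegral_const]
  simp only [smul_eq_mul]
  field_simp

lemma h_bounded {n : ℕ} (u : SchwartzMap (PSpace n) ℝ) : ∃ M, ∀ z, |u z| ≤ M := by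
  obtain ⟨M, _, hM⟩ := u.decay 0 0
  exact ⟨M, fun z => by simpa using hM z⟩

lemma h_osc_bdd {n : ℕ} (hn : 1 ≤ n) (u : SchwartzMap (PSpace n) ℝ) :
    BddAbove (oscSet Set.univ ⇑u) := by
  obtain ⟨M, hM⟩ := h_bounded u
  refine ⟨M + M, ?_⟩
  rintro v ⟨z₀, r, hr, -, rfl⟩
  refine (le_abs_self _).trans (h_avg_le hn z₀ hr _ _ fun z _ => ?_)
  rw [abs_abs]
  refine (abs_sub _ _).trans (add_le_add (hM z) (h_avg_le hn z₀ hr _ _ fun z _ => hM z))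

lemma h_bmo {n : ℕ} (hn : 1 ≤ n) (u : SchwartzMap (PSpace n) ℝ) (z₀ : PSpace n) {r : ℝ}
    (hr : 0 < r) :
    ⨍ z in pCube z₀ r, |u z - ⨍ w in pCube z₀ r, u w| ≤ pBMO Set.univ ⇑u :=
  le_csSup (h_osc_bdd hn u) ⟨z₀, r, hr, Set.subset_univ _, rfl⟩

lemma h_bmo_nonneg {n : ℕ} (u : SchwartzMap (PSpace n) ℝ) : 0 ≤ pBMO Set.univ ⇑u := by
  refine Real.sSup_nonneg ?_
  rintro v ⟨z₀, r, hr, -, rfl⟩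
  rw [setAverage_eq, smul_eq_mul]
  have : 0 ≤ volume.real (pCube z₀ r) := measureReal_nonneg
  have : 0 ≤ ∫ z in pCube z₀ r, |u z - ⨍ w in pCube z₀ r, u w| :=
    integral_nonneg fun _ => abs_nonneg _
  positivity

lemma h_step {n : ℕ} (hn : 1 ≤ n) (u : SchwartzMap (PSpace n) ℝ) (z₀ : PSpace n) {r : ℝ}
    (hr : 0 < r) :
    |(⨍ z in pCube z₀ r, u z) - ⨍ z in pCube z₀ (2 * r), u z|
      ≤ 2 ^ (n + 2) * pBMO Set.univ ⇑u := by
  have hr2 : 0 < 2 * r := by positivity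
  set c := ⨍ z in pCube z₀ (2 * r), u z with hc
  have hb := h_bmo hn u z₀ hr2
  rw [← hc] at hb
  rw [← h_avg_sub hn z₀ hr]
  have hfin : volume (pCube z₀ (2 * r)) ≠ ⊤ := by
    rw [h_cube_vol hn z₀ hr2]; exact ENNReal.ofReal_ne_top
  have hint : IntegrableOn (fun z => |u z - c|) (pCube z₀ (2 * r)) :=
    (u.integrable.integrableOn.sub (integrableOn_const hfin)).norm
  have hsub : pCube z₀ r ⊆ pCube z₀ (2 * r) := by
    intro z hz
    have hz' : pnorm (z - z₀) < r := hz
    exact (show pnorm (z - z₀) < 2 * r by linarith)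
  have h1 : |∫ z in pCube z₀ r, (u z - c)| ≤ ∫ z in pCube z₀ (2 * r), |u z - c| :=
    (abs_integral_le_integral_abs).trans
      (setIntegral_mono_set hint (Filter.Eventually.of_forall fun _ => abs_nonneg _)
        hsub.eventuallyLE)
  rw [setAverage_eq, smul_eq_mul, h_cube_real hn z₀ hr2, inv_mul_le_iff₀ (by positivity)] at hb
  rw [setAverage_eq, smul_eq_mul, h_cube_real hn z₀ hr, abs_mul,
    abs_of_pos (by positivity), inv_mul_le_iff₀ (by positivity)]
  refine h1.trans (hb.trans (le_of_eq ?_))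
  rw [mul_pow]; ring

lemma h_steps {n : ℕ} (hn : 1 ≤ n) (u : SchwartzMap (PSpace n) ℝ) (z₀ : PSpace n) {r : ℝ}
    (hr : 0 < r) (k : ℕ) :
    |(⨍ z in pCube z₀ r, u z) - ⨍ z in pCube z₀ (2 ^ k * r), u z|
      ≤ k * (2 ^ (n + 2) * pBMO Set.univ ⇑u) := by
  induction k with
  | zero => simp
  | succ k ih =>
    have h := h_step hn u z₀ (r := 2 ^ k * r) (by positivity)
    rw [← mul_assoc, ← pow_succ'] at h
    refine (abs_sub_le _ _ _).trans ((add_le_add ih h).trans (le_of_eq ?_))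
    push_cast; ring

lemma h_large {n : ℕ} (hn : 1 ≤ n) (m : ℕ) (u : SchwartzMap (PSpace n) ℝ) (z₀ : PSpace n) {R : ℝ}
    (hR : 1 ≤ R) (hW : sobNorm m Set.univ ⇑u ≤ R) : |⨍ z in pCube z₀ R, u z| ≤ 1 := by
  have hR0 : 0 < R := by linarith
  have hfin : volume (pCube z₀ R) ≠ ⊤ := by
    rw [h_cube_vol hn z₀ hR0]; exact ENNReal.ofReal_ne_top
  have hsq : Integrable (fun z => |u z| ^ 2) :=
    (memLp_two_iff_integrable_sq_norm u.continuous.aestronglyMeasurable).1 (u.memLp 2)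
  have h1 : ∫ z in pCube z₀ R, |u z| ^ 2 ≤ R ^ 2 := by
    refine (setIntegral_le_integral hsq (Filter.Eventually.of_forall fun _ => by positivity)).trans ?_
    rw [h_L2]
    exact pow_le_pow_left₀ ENNReal.toReal_nonneg ((h_zero_order m u).trans hW) 2
  have hV : R ^ 2 ≤ volume.real (pCube z₀ R) := by
    rw [h_cube_real hn z₀ hR0]
    have h2 : R ^ 2 ≤ R ^ (n + 2) := pow_le_pow_right₀ hR (by omega)
    have h3 : (1 : ℝ) ≤ 2 ^ (n + 1) := one_le_pow₀ (by norm_num)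
    nlinarith [pow_pos hR0 (n + 2)]
  have hV0 : 0 < volume.real (pCube z₀ R) := lt_of_lt_of_le (by positivity) hV
  have h2 : |∫ z in pCube z₀ R, u z| ≤ ∫ z in pCube z₀ R, (1 / 2 + 1 / 2 * |u z| ^ 2) := by
    refine (abs_integral_le_integral_abs).trans ?_
    refine integral_mono u.integrable.integrableOn.abs
      ((integrableOn_const hfin).add (hsq.integrableOn.const_mul _)) fun z => ?_
    change |u z| ≤ 1 / 2 + 1 / 2 * |u z| ^ 2
    nlinarith [sq_nonneg (|u z| - 1)]
  have hc1 : Integrable (fun _ : PSpace n => (1 / 2 : ℝ)) (volume.restrict (pCube z₀ R)) :=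
    integrableOn_const hfin
  have hc2 : Integrable (fun z : PSpace n => 1 / 2 * |u z| ^ 2) (volume.restrict (pCube z₀ R)) :=
    hsq.integrableOn.const_mul _
  rw [integral_add hc1 hc2, setIntegral_const, integral_const_mul, smul_eq_mul] at h2
  rw [setAverage_eq, smul_eq_mul, abs_mul, abs_of_pos (inv_pos.2 hV0), inv_mul_le_iff₀ hV0]
  linarith

lemma h_cube_norm {n : ℕ} (hn : 1 ≤ n) (z₀ z : PSpace n) {r : ℝ} (hr : 0 < r) (hr1 : r ≤ 1)
    (hz : z ∈ pCube z₀ r) : ‖z₀ - z‖ ≤ (n + 1) * r := by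
  rw [h_mem_cube hn z₀ z hr] at hz
  rw [norm_sub_rev]
  refine (h_norm_le_sum _).trans ?_
  have : ∀ i ∈ Finset.univ, |(z - z₀) i| ≤ r := by
    intro i _
    have h := hz i
    rw [PiLp.sub_apply]
    split_ifs at h
    · nlinarith
    · exact h.le
  refine (Finset.sum_le_sum this).trans (le_of_eq ?_)
  simp

lemma h_small {n m : ℕ} (hn : 1 ≤ n) {K : ℝ} (hK : 0 ≤ K) (u : SchwartzMap (PSpace n) ℝ)
    (z₀ : PSpace n)
    (hH : ∀ z w : PSpace n,
      |u z - u w| ≤ K * ‖z - w‖ ^ (1 / 8 : ℝ) * max 1 (sobNorm m Set.univ ⇑u))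
    {r : ℝ} (hr : 0 < r) (hr1 : r ≤ 1) (hrW : r * max 1 (sobNorm m Set.univ ⇑u) ^ 8 ≤ 1) :
    |u z₀ - ⨍ z in pCube z₀ r, u z| ≤ K * ((n : ℝ) + 1) ^ (1 / 8 : ℝ) := by
  rw [abs_sub_comm, ← h_avg_sub hn z₀ hr]
  refine h_avg_le hn z₀ hr _ _ fun z hz => ?_
  rw [abs_sub_comm]
  refine (hH z₀ z).trans ?_
  set W := max 1 (sobNorm m Set.univ ⇑u) with hW
  have hW1 : 1 ≤ W := le_max_left _ _
  have h1 := Real.rpow_le_rpow (norm_nonneg _) (h_cube_norm hn z₀ z hr hr1 hz)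
    (by norm_num : (0 : ℝ) ≤ 1 / 8)
  rw [Real.mul_rpow (by positivity) hr.le] at h1
  have h2 : r ^ (1 / 8 : ℝ) * W ≤ 1 := by
    have := Real.rpow_le_one (by positivity) hrW (by norm_num : (0 : ℝ) ≤ 1 / 8)
    rw [Real.mul_rpow hr.le (by positivity), ← Real.rpow_natCast W, ← Real.rpow_mul
      (by positivity)] at this
    norm_num at this
    simpa using this
  calc K * ‖z₀ - z‖ ^ (1 / 8 : ℝ) * W
      ≤ K * (((n : ℝ) + 1) ^ (1 / 8 : ℝ) * r ^ (1 / 8 : ℝ)) * W := by gcongr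
    _ = K * ((n : ℝ) + 1) ^ (1 / 8 : ℝ) * (r ^ (1 / 8 : ℝ) * W) := by ring
    _ ≤ K * ((n : ℝ) + 1) ^ (1 / 8 : ℝ) * 1 := by gcongr
    _ = _ := mul_one _

lemma h_scale (x : ℝ) : ∃ N : ℕ, (N : ℝ) ≤ 16 * logPlus x + 1 ∧ max 1 x ^ 8 ≤ (2 : ℝ) ^ N := by
  have hL0 : 0 ≤ logPlus x := le_max_right _ _
  have hL : Real.log (max 1 x) ≤ logPlus x := by
    rcases le_total 1 x with h | h
    · rw [max_eq_right h]; exact le_max_left _ _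
    · rw [max_eq_left h]; simpa using hL0
  have hpos : 0 < max 1 x := lt_of_lt_of_le one_pos (le_max_left _ _)
  refine ⟨⌈16 * logPlus x⌉₊, (Nat.ceil_lt_add_one (by positivity)).le, ?_⟩
  rw [← Real.log_le_log_iff (by positivity) (by positivity), Real.log_pow, Real.log_pow]
  have h1 := Nat.le_ceil (16 * logPlus x)
  have h2 := Real.log_two_gt_d9
  have h3 : 16 * logPlus x * (1 / 2) ≤ (⌈16 * logPlus x⌉₊ : ℝ) * Real.log 2 :=
    mul_le_mul h1 (by linarith) (by norm_num) (by positivity)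
  push_cast
  linarith

end helpers

/-- **Parabolic logarithmic Sobolev inequality on `ℝ^{n+1}`** (Theorem 1.1):
`‖u‖_∞ ≤ C (1 + ‖u‖_{BMOₚ} (1 + log⁺ ‖u‖_{W₂^{2m,m}}))`. -/
theorem parabolic_log_sobolev_inequality (n m : ℕ) (hn : 1 ≤ n) (hm : 0 < m)
    (hmn : ((n : ℝ) + 2) / 4 < m) :
    ∃ C : ℝ, 0 < C ∧ ∀ u : SchwartzMap (PSpace n) ℝ,
      (⨆ z, |u z|) ≤
        C * (1 + pBMO Set.univ ⇑u * (1 + logPlus (sobNorm m Set.univ ⇑u))) := by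
  obtain ⟨K, hK, hH⟩ := h_holder n m hm hmn
  refine ⟨K * ((n : ℝ) + 1) ^ (1 / 8 : ℝ) + 1 + 32 * 2 ^ (n + 2), by positivity, fun u => ?_⟩
  have hB := h_bmo_nonneg u
  have hL0 : 0 ≤ logPlus (sobNorm m Set.univ ⇑u) := le_max_right _ _
  obtain ⟨N, hN1, hN2⟩ := h_scale (sobNorm m Set.univ ⇑u)
  refine ciSup_le fun z₀ => ?_
  have h2N : (1 : ℝ) ≤ 2 ^ N := one_le_pow₀ (by norm_num)
  have hW1 : 1 ≤ max 1 (sobNorm m Set.univ ⇑u) := le_max_left _ _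
  have hWR : sobNorm m Set.univ ⇑u ≤ 2 ^ N :=
    (le_max_right _ _).trans ((le_self_pow₀ hW1 (by norm_num)).trans hN2)
  have e1 := h_small hn hK u z₀ (hH u) (r := ((2 : ℝ) ^ N)⁻¹) (by positivity)
    (inv_le_one_of_one_le₀ h2N) (by rw [inv_mul_le_iff₀ (by positivity), mul_one]; exact hN2)
  have e2 := h_steps hn u z₀ (r := ((2 : ℝ) ^ N)⁻¹) (by positivity) (2 * N)
  have e3 := h_large hn m u z₀ h2N hWR
  have e4 : (2 : ℝ) ^ (2 * N) * ((2 : ℝ) ^ N)⁻¹ = 2 ^ N := by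
    rw [two_mul, pow_add]; field_simp
  rw [e4] at e2
  generalize (⨍ z in pCube z₀ (2 ^ N)⁻¹, u z) = a at *
  generalize (⨍ z in pCube z₀ (2 ^ N), u z) = b at *
  set B := pBMO Set.univ ⇑u
  set L := logPlus (sobNorm m Set.univ ⇑u)
  set A := K * ((n : ℝ) + 1) ^ (1 / 8 : ℝ) with hA
  have hA0 : 0 ≤ A := by positivity
  have h1 : |u z₀| ≤ A + ((2 * N : ℕ) : ℝ) * (2 ^ (n + 2) * B) + 1 := by
    rw [abs_le] at *
    constructor <;> linarith [e1.1, e1.2, e2.1, e2.2, e3.1, e3.2]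
  have h2 : ((2 * N : ℕ) : ℝ) * (2 ^ (n + 2) * B) ≤ (32 * (1 + L)) * (2 ^ (n + 2) * B) := by
    gcongr
    push_cast
    linarith
  have h3 : 0 ≤ A * (B * (1 + L)) := by positivity
  have h4 : 0 ≤ B * (1 + L) := by positivity
  have h5 : (0 : ℝ) ≤ 32 * 2 ^ (n + 2) := by positivity
  calc |u z₀| ≤ A + (32 * (1 + L)) * (2 ^ (n + 2) * B) + 1 := by linarith
    _ ≤ A + (32 * (1 + L)) * (2 ^ (n + 2) * B) + 1 + A * (B * (1 + L)) + B * (1 + L)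
        + 32 * 2 ^ (n + 2) := by linarith
    _ = _ := by ring

end
end

section
/- Let n ≥ 1, T > 0, let Ω_T = (0,1)ⁿ × (0,T) ⊂ ℝ^{n+1}, and let m be a positive integer with m > (n+2)/4. Then there exists a constant C = C(m,n,T) > 0 such that for every function u that is smooth on an open neighborhood of the closure of Ω_T, ‖u‖_{L^∞(Ω_T)} ≤ C (1 + (‖u‖_{BMOₚ(Ω_T)} + ‖u‖_{L¹(Ω_T)}) (1 + log⁺ ‖u‖_{W₂^{2m,m}(Ω_T)})). -/
open MeasureTheory Real
open scoped FourierTransform ENNReal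

noncomputable section

def nu : Measure ℝ := volume.restrict (Set.Ioo 0 1)

instance : IsProbabilityMeasure nu := ⟨by simp [nu]⟩

lemma integral_nu (f : ℝ → ℝ) : ∫ t, f t ∂nu = ∫ t in (0:ℝ)..1, f t := by
  rw [intervalIntegral.integral_of_le zero_le_one, integral_Ioc_eq_integral_Ioo]; rfl

lemma hasDerivAt_fwdDiff_iter (H : ℕ → ℝ → ℝ)
    (hH : ∀ j x, HasDerivAt (H j) (H (j+1) x) x) (h : ℝ) (M : ℕ) :
    ∀ j x, HasDerivAt ((fwdDiff h)^[M] (H j)) ((fwdDiff h)^[M] (H (j+1)) x) x := by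
  induction M with
  | zero => intro j x; exact hH j x
  | succ M ih =>
    intro j x
    simp only [Function.iterate_succ_apply', fwdDiff]
    exact ((ih j (x+h)).comp_add_const x h).sub (ih j x)

lemma fwdDiff_bound (H : ℕ → ℝ → ℝ)
    (hH : ∀ j x, HasDerivAt (H j) (H (j+1) x) x) (h : ℝ) (h0 : 0 ≤ h) (h1 : h ≤ 1) (M : ℕ) :
    ∀ j x, |(fwdDiff h)^[M+1] (H j) x| ≤ ∫ t in x..(x + (M+1) * h), |H (j + (M+1)) t| := by
  have hc : ∀ j, Continuous (H j) := fun j =>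
    continuous_iff_continuousAt.2 fun x => (hH j x).continuousAt
  induction M with
  | zero =>
    intro j x
    have := intervalIntegral.integral_eq_sub_of_hasDerivAt (a := x) (b := x + h) (f := H j)
      (f' := H (j+1)) (fun t _ => hH j t) ((hc (j+1)).intervalIntegrable _ _)
    simp only [Nat.cast_zero, zero_add, one_mul, Function.iterate_one, fwdDiff]
    rw [← this]
    exact intervalIntegral.abs_integral_le_integral_abs (by linarith)
  | succ M ih =>
    intro j x
    rw [Function.iterate_succ_apply']
    simp only [fwdDiff]
    set B := ∫ t in x..(x + (((M+1:ℕ):ℝ)+1) * h), |H (j + (M+1+1)) t| with hB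
    have hB0 : 0 ≤ B := intervalIntegral.integral_nonneg (by push_cast; nlinarith) (fun _ _ => abs_nonneg _)
    have key : ∀ s ∈ Set.Icc x (x+h), ‖(fwdDiff h)^[M+1] (H (j+1)) s‖ ≤ B := by
      intro s hs
      rw [Real.norm_eq_abs]
      refine (ih (j+1) s).trans ?_
      rw [hB, show j + 1 + (M+1) = j + (M+1+1) by ring]
      apply intervalIntegral.integral_mono_interval hs.1
      · nlinarith
      · push_cast; nlinarith [hs.2]
      · exact Filter.Eventually.of_forall fun _ => abs_nonneg _
      · exact ((hc _).abs).intervalIntegrable _ _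
    have := (convex_Icc x (x+h)).norm_image_sub_le_of_norm_hasDerivWithin_le
      (fun s hs => (hasDerivAt_fwdDiff_iter H hH h (M+1) j s).hasDerivWithinAt) key
      (Set.left_mem_Icc.2 (by linarith)) (Set.right_mem_Icc.2 (by linarith))
    rw [Real.norm_eq_abs] at this
    refine this.trans ?_
    simp only [add_sub_cancel_left, Real.norm_eq_abs, abs_of_nonneg h0]
    nlinarith

lemma kernel_exists (M : ℕ) (hM : 0 < M) : ∃ k : ℝ → ℝ, ∃ C : ℝ, 1 ≤ C ∧ Measurable k ∧
    (∀ x, |k x| ≤ C) ∧ ∀ H : ℕ → ℝ → ℝ, (∀ j x, HasDerivAt (H j) (H (j+1) x) x) →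
      |∫ t, k t * H 0 t ∂nu - H 0 0| ≤ C * ∫ t, |H M t| ∂nu := by
  obtain ⟨M, rfl⟩ : ∃ N, M = N + 1 := ⟨M - 1, by omega⟩
  set c : ℕ → ℝ := fun l => (((-1:ℤ)^(M+1-(l+1)) * (M+1).choose (l+1) : ℤ) : ℝ) with hc
  set e : ℝ := (-1)^(M+1) with he
  have he2 : e * e = 1 := by rw [he, ← mul_pow]; norm_num
  have heabs : |e| = 1 := by simp [he]
  set S : ℕ → Set ℝ := fun l => Set.Iic (((l:ℝ)+1)/(M+1))
  set k : ℝ → ℝ := fun t => ∑ l ∈ Finset.range (M+1),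
    (-e * c l * ((M+1)/((l:ℝ)+1))) * (S l).indicator (fun _ => (1:ℝ)) t with hk
  refine ⟨k, 1 + ∑ l ∈ Finset.range (M+1), |(-e * c l * ((M+1)/((l:ℝ)+1)))|, ?_, ?_, ?_, ?_⟩
  · have : 0 ≤ ∑ l ∈ Finset.range (M+1), |(-e * c l * ((M+1)/((l:ℝ)+1)))| :=
      Finset.sum_nonneg fun _ _ => abs_nonneg _
    linarith
  · apply Finset.measurable_sum
    intro l _
    exact (measurable_const.indicator measurableSet_Iic).const_mul _
  · intro x
    refine (Finset.abs_sum_le_sum_abs _ _).trans ?_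
    refine le_trans ?_ (le_add_of_nonneg_left zero_le_one)
    apply Finset.sum_le_sum
    intro l _
    rw [abs_mul]
    refine mul_le_of_le_one_right (abs_nonneg _) ?_
    by_cases hx : x ∈ S l <;> simp [hx]
  · intro H hH
    have hcont : ∀ j, Continuous (H j) := fun j =>
      continuous_iff_continuousAt.2 fun x => (hH j x).continuousAt
    have hM1 : (0:ℝ) < M + 1 := by positivity
    have h1 : ∫ t, k t * H 0 t ∂nu = ∑ l ∈ Finset.range (M+1),
        (-e * c l) * ∫ y in (0:ℝ)..1, H 0 ((((l:ℝ)+1)/(M+1)) * y) := by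
      have : ∀ t, k t * H 0 t = ∑ l ∈ Finset.range (M+1), (-e * c l * ((M+1)/((l:ℝ)+1))) *
          (S l).indicator (H 0) t := by
        intro t
        rw [hk, Finset.sum_mul]
        refine Finset.sum_congr rfl fun l _ => ?_
        by_cases ht : t ∈ S l <;> simp [ht]
      rw [integral_congr_ae (Filter.Eventually.of_forall this)]
      rw [integral_finsetSum]
      · refine Finset.sum_congr rfl fun l hl => ?_
        have hl' : (l:ℝ) + 1 ≤ M + 1 := by
          have := Finset.mem_range.1 hl
          exact_mod_cast this
        rw [integral_const_mul, integral_indicator measurableSet_Iic,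
          intervalIntegral.integral_comp_mul_left _ (by positivity), nu,
          Measure.restrict_restrict measurableSet_Iic]
        have : ∫ t in Set.Iic (((l:ℝ)+1)/(M+1)) ∩ Set.Ioo 0 1, H 0 t
            = ∫ t in (0:ℝ)..(((l:ℝ)+1)/(M+1)), H 0 t := by
          rw [intervalIntegral.integral_of_le (by positivity)]
          have hle : ((l:ℝ)+1)/(M+1) ≤ 1 := by rw [div_le_one hM1]; exact hl'
          apply setIntegral_congr_set
          have h2 : (Set.Ioo (0:ℝ) 1 : Set ℝ) =ᵐ[volume] Set.Ioc 0 1 := Ioo_ae_eq_Ioc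
          have h3 : Set.Iic (((l:ℝ)+1)/(M+1)) ∩ Set.Ioc 0 1 = Set.Ioc 0 (((l:ℝ)+1)/(M+1)) := by
            ext t
            simp only [Set.mem_inter_iff, Set.mem_Iic, Set.mem_Ioc]
            constructor
            · rintro ⟨a, b, _⟩; exact ⟨b, a⟩
            · rintro ⟨a, b⟩; exact ⟨b, a, b.trans hle⟩
          rw [← h3]
          exact ae_eq_set_inter (Filter.EventuallyEq.refl _ _) h2
        rw [this]
        simp only [mul_zero, mul_one, smul_eq_mul, inv_div]
        ring
      · intro l _
        refine Integrable.const_mul ?_ _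
        refine Integrable.indicator ?_ measurableSet_Iic
        exact ((hcont 0).integrableOn_Icc (a := 0) (b := 1)).mono_set Set.Ioo_subset_Icc_self
    have h2 : ∫ y in (0:ℝ)..1, (fwdDiff (y/(M+1)))^[M+1] (H 0) 0 =
        e * H 0 0 + ∑ l ∈ Finset.range (M+1),
        (c l) * ∫ y in (0:ℝ)..1, H 0 ((((l:ℝ)+1)/(M+1)) * y) := by
      have : ∀ y : ℝ, (fwdDiff (y/(M+1)))^[M+1] (H 0) 0 =
          e * H 0 0 + ∑ l ∈ Finset.range (M+1), (c l) * H 0 ((((l:ℝ)+1)/(M+1)) * y) := by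
        intro y
        rw [fwdDiff_iter_eq_sum_shift, Finset.sum_range_succ', add_comm]
        congr 1
        · simp [he]
        · refine Finset.sum_congr rfl fun l _ => ?_
          rw [zsmul_eq_mul]
          congr 2
          simp only [zero_add, nsmul_eq_mul]
          push_cast; ring
      simp_rw [this]
      rw [intervalIntegral.integral_add, intervalIntegral.integral_finsetSum]
      · simp
      · intro l _
        apply Continuous.intervalIntegrable
        have := hcont 0
        fun_prop
      · simp
      · apply Continuous.intervalIntegrable
        have := hcont 0
        fun_prop
    have h3 : ∫ t, k t * H 0 t ∂nu - H 0 0 =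
        -e * ∫ y in (0:ℝ)..1, (fwdDiff (y/(M+1)))^[M+1] (H 0) 0 := by
      rw [h1, h2, mul_add, Finset.mul_sum]
      rw [show -e * (e * H 0 0) = -((e*e) * H 0 0) by ring, he2]
      simp_rw [mul_assoc]
      ring
    rw [h3, abs_mul, abs_neg, heabs, one_mul]
    have h4 : |∫ y in (0:ℝ)..1, (fwdDiff (y/(M+1)))^[M+1] (H 0) 0| ≤ ∫ t, |H (M+1) t| ∂nu := by
      have := intervalIntegral.norm_integral_le_of_norm_le_const (a := (0:ℝ)) (b := 1)
        (f := fun y => (fwdDiff (y/(M+1)))^[M+1] (H 0) 0) (C := ∫ t, |H (M+1) t| ∂nu) ?_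
      · simpa using this
      · intro y hy
        rw [Set.uIoc_of_le zero_le_one] at hy
        rw [Real.norm_eq_abs]
        have hy0 : 0 ≤ y / (M+1) := div_nonneg hy.1.le hM1.le
        refine (fwdDiff_bound H hH (y/(M+1)) hy0 ?_ M 0 0).trans ?_
        · rw [div_le_one hM1]; have : (0:ℝ) ≤ M := by positivity
          linarith [hy.2]
        · rw [integral_nu, zero_add, zero_add]
          apply intervalIntegral.integral_mono_interval le_rfl
          · positivity
          · rw [mul_div_cancel₀ _ hM1.ne']; exact hy.2
          · exact Filter.Eventually.of_forall fun _ => abs_nonneg _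
          · exact ((hcont _).abs).intervalIntegrable _ _
    refine h4.trans ?_
    refine le_mul_of_one_le_left (integral_nonneg fun _ => abs_nonneg _) ?_
    have : 0 ≤ ∑ l ∈ Finset.range (M+1), |(-e * c l * ((M+1)/((l:ℝ)+1)))| :=
      Finset.sum_nonneg fun _ _ => abs_nonneg _
    linarith

def PP (d : ℕ) : Measure (Fin d → ℝ) := Measure.pi fun _ => nu

instance (d : ℕ) : IsProbabilityMeasure (PP d) := by unfold PP; infer_instance

def ucube (d : ℕ) : Set (Fin d → ℝ) := Set.univ.pi fun _ => Set.Ioo (0:ℝ) 1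

lemma PP_eq (d : ℕ) : PP d = volume.restrict (ucube d) := by
  rw [PP, ucube, volume_pi, Measure.restrict_pi_pi]; rfl

lemma measurableSet_ucube (d : ℕ) : MeasurableSet (ucube d) :=
  MeasurableSet.univ_pi fun _ => measurableSet_Ioo

/-- The affine map sending the unit cube to a box with corner `z`. -/
def Phi {n : ℕ} (z : PSpace n) (D : Fin (n+1) → ℝ) (y : Fin (n+1) → ℝ) : PSpace n :=
  z + WithLp.toLp 2 (fun i => D i * y i)

lemma Phi_apply {n : ℕ} (z : PSpace n) (D y : Fin (n+1) → ℝ) (i : Fin (n+1)) :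
    Phi z D y i = z i + D i * y i := by simp [Phi]

lemma continuous_Phi {n : ℕ} (z : PSpace n) (D : Fin (n+1) → ℝ) : Continuous (Phi z D) := by
  unfold Phi
  refine continuous_const.add ?_
  exact (PiLp.continuous_toLp 2 _).comp (by fun_prop)

lemma Phi_injective {n : ℕ} (z : PSpace n) (D : Fin (n+1) → ℝ) (hD : ∀ i, D i ≠ 0) :
    Function.Injective (Phi z D) := by
  intro a b h
  ext i
  have := congrArg (fun w : PSpace n => w i) h
  simp only [Phi_apply, add_right_inj] at this
  exact mul_left_cancel₀ (hD i) this

lemma Phi_embedding {n : ℕ} (z : PSpace n) (D : Fin (n+1) → ℝ) (hD : ∀ i, D i ≠ 0) :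
    MeasurableEmbedding (Phi z D) :=
  (continuous_Phi z D).measurableEmbedding (Phi_injective z D hD)

lemma map_Phi {n : ℕ} (z : PSpace n) (D : Fin (n+1) → ℝ) (hD : ∀ i, D i ≠ 0) :
    ENNReal.ofReal (∏ i, |D i|) • Measure.map (Phi z D) volume = volume := by
  have hdet : (Matrix.diagonal D).det ≠ 0 := by
    rw [Matrix.det_diagonal]; exact Finset.prod_ne_zero_iff.2 fun i _ => hD i
  have h1 := Real.smul_map_diagonal_volume_pi hdet
  rw [Matrix.det_diagonal, Finset.abs_prod] at h1
  have hlin : Measurable (Matrix.toLin' (Matrix.diagonal D)) :=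
    (LinearMap.continuous_of_finiteDimensional _).measurable
  have h2 : Phi z D = (fun w => z + w) ∘ (WithLp.toLp 2) ∘ (Matrix.toLin' (Matrix.diagonal D)) := by
    ext y i
    simp [Phi_apply, Matrix.mulVec_diagonal]
  have hto := PiLp.volume_preserving_toLp (Fin (n+1))
  rw [h2, ← Measure.map_map (measurable_const_add z) (hto.measurable.comp hlin),
    ← Measure.map_map hto.measurable hlin, ← Measure.map_smul, ← Measure.map_smul, h1, hto.map_eq,
    map_add_left_eq_self]

lemma integral_Phi {n : ℕ} (z : PSpace n) (D : Fin (n+1) → ℝ) (hD : ∀ i, D i ≠ 0)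
    (F : PSpace n → ℝ) :
    ∫ y, F (Phi z D y) ∂(PP (n+1)) =
      (∏ i, |D i|)⁻¹ * ∫ w in Phi z D '' ucube (n+1), F w := by
  have hpos : 0 < ∏ i, |D i| := Finset.prod_pos fun i _ => abs_pos.2 (hD i)
  have he := Phi_embedding z D hD
  conv_rhs => rw [← map_Phi z D hD]
  rw [Measure.restrict_smul, integral_smul_measure, he.restrict_map, he.integral_map,
    Set.preimage_image_eq _ (Phi_injective z D hD), PP_eq, ENNReal.toReal_ofReal hpos.le,
    smul_eq_mul, ← mul_assoc, inv_mul_cancel₀ hpos.ne', one_mul]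

lemma integrable_PP {d : ℕ} (F : (Fin d → ℝ) → ℝ) (hF : Continuous F) : Integrable F (PP d) := by
  rw [PP_eq]
  have h : ucube d ⊆ Set.Icc (0 : Fin d → ℝ) 1 := by
    intro y hy
    exact ⟨fun i => (hy i trivial).1.le, fun i => (hy i trivial).2.le⟩
  exact (hF.continuousOn.integrableOn_compact isCompact_Icc).mono_set h

lemma integrable_nu (F : ℝ → ℝ) (hF : Continuous F) : Integrable F nu :=
  (hF.integrableOn_Icc (a := 0) (b := 1)).mono_set Set.Ioo_subset_Icc_self

/-- directional derivative -/
def Dd {n : ℕ} (i : Fin (n+1)) (u : PSpace n → ℝ) : PSpace n → ℝ :=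
  fun z => fderiv ℝ u z (EuclideanSpace.single i 1)

lemma contDiff_Dd {n : ℕ} (i : Fin (n+1)) (u : PSpace n → ℝ) (hu : ContDiff ℝ (⊤ : ℕ∞) u) :
    ContDiff ℝ (⊤ : ℕ∞) (Dd i u) := by
  unfold Dd
  exact (hu.fderiv_right (m := (⊤ : ℕ∞)) (by simp)).clm_apply contDiff_const

lemma contDiff_Dd_iter {n : ℕ} (i : Fin (n+1)) (u : PSpace n → ℝ) (hu : ContDiff ℝ (⊤ : ℕ∞) u)
    (j : ℕ) : ContDiff ℝ (⊤ : ℕ∞) ((Dd i)^[j] u) := by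
  induction j with
  | zero => exact hu
  | succ j ih => rw [Function.iterate_succ_apply']; exact contDiff_Dd i _ ih

lemma line_deriv {n : ℕ} (i : Fin (n+1)) (u : PSpace n → ℝ) (hu : ContDiff ℝ (⊤ : ℕ∞) u)
    (z : PSpace n) (D : Fin (n+1) → ℝ) (y' : Fin n → ℝ) (j : ℕ) (t : ℝ) :
    HasDerivAt (fun t => D i ^ j * (Dd i)^[j] u (Phi z D (i.insertNth t y')))
      (D i ^ (j+1) * (Dd i)^[j+1] u (Phi z D (i.insertNth t y'))) t := by
  have hγ : HasDerivAt (fun t : ℝ => Phi z D (i.insertNth t y'))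
      (D i • EuclideanSpace.single i (1:ℝ)) t := by
    have : (fun t : ℝ => Phi z D (i.insertNth t y')) =
        fun t : ℝ => Phi z D (i.insertNth 0 y') + t • (D i • EuclideanSpace.single i (1:ℝ)) := by
      funext t
      ext l
      rcases Fin.eq_self_or_eq_succAbove i l with rfl | ⟨l, rfl⟩
      · simp [Phi_apply]; ring
      · simp [Phi_apply]
    rw [this]
    simpa using ((hasDerivAt_id t).smul_const (D i • EuclideanSpace.single i (1:ℝ))).const_add
      (Phi z D (i.insertNth 0 y'))
  have hd : DifferentiableAt ℝ ((Dd i)^[j] u) (Phi z D (i.insertNth t y')) :=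
    (contDiff_Dd_iter i u hu j).differentiable (by simp) _
  have h := (hd.hasFDerivAt.comp_hasDerivAt t hγ).const_mul (D i ^ j)
  convert! h using 1
  rw [Function.iterate_succ_apply', Dd, map_smul, smul_eq_mul]
  ring

lemma mp_insert (n : ℕ) (i : Fin (n+1)) :
    MeasurePreserving (fun p : ℝ × (Fin n → ℝ) => (i.insertNth p.1 p.2 : Fin (n+1) → ℝ))
      (nu.prod (PP n)) (PP (n+1)) :=
  (measurePreserving_piFinSuccAbove (fun _ : Fin (n+1) => nu) i).symm

lemma me_insert (n : ℕ) (i : Fin (n+1)) :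
    MeasurableEmbedding (fun p : ℝ × (Fin n → ℝ) => (i.insertNth p.1 p.2 : Fin (n+1) → ℝ)) :=
  (MeasurableEquiv.piFinSuccAbove (fun _ : Fin (n+1) => ℝ) i).symm.measurableEmbedding

lemma integrable_insert {n : ℕ} (i : Fin (n+1)) (F : (Fin (n+1) → ℝ) → ℝ)
    (hF : Integrable F (PP (n+1))) :
    Integrable (fun p : ℝ × (Fin n → ℝ) => F (i.insertNth p.1 p.2)) (nu.prod (PP n)) :=
  ((mp_insert n i).integrable_comp_emb (me_insert n i)).2 hF

lemma fubini_insert {n : ℕ} (i : Fin (n+1)) (F : (Fin (n+1) → ℝ) → ℝ)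
    (hF : Integrable F (PP (n+1))) :
    ∫ y, F y ∂(PP (n+1)) = ∫ y', ∫ t, F (i.insertNth t y') ∂nu ∂(PP n) := by
  rw [← (mp_insert n i).integral_comp (me_insert n i), integral_prod_symm]
  exact integrable_insert i F hF

/-- tensor kernel -/
def KK {d : ℕ} (k : Fin d → ℝ → ℝ) (y : Fin d → ℝ) : ℝ := ∏ i, k i (y i)

lemma KK_measurable {d : ℕ} (k : Fin d → ℝ → ℝ) (hk : ∀ i, Measurable (k i)) :
    Measurable (KK k) :=
  Finset.measurable_prod _ fun i _ => (hk i).comp (measurable_pi_apply i)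

lemma KK_bound {d : ℕ} (k : Fin d → ℝ → ℝ) (C : ℝ) (hk : ∀ i x, |k i x| ≤ C)
    (y : Fin d → ℝ) : |KK k y| ≤ C ^ d := by
  rw [KK, Finset.abs_prod]
  calc ∏ i, |k i (y i)| ≤ ∏ i : Fin d, C := Finset.prod_le_prod (fun _ _ => abs_nonneg _) fun i _ => hk i _
    _ = C ^ d := by simp

lemma integrable_KK_mul {d : ℕ} (k : Fin d → ℝ → ℝ) (hk : ∀ i, Measurable (k i)) (C : ℝ)
    (hkC : ∀ i x, |k i x| ≤ C) (F : (Fin d → ℝ) → ℝ) (hF : Continuous F) :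
    Integrable (fun y => KK k y * F y) (PP d) :=
  (integrable_PP F hF).bdd_mul (KK_measurable k hk).aestronglyMeasurable
    (Filter.Eventually.of_forall fun y => KK_bound k C hkC y)

def EE {n : ℕ} (k : Fin (n+1) → ℝ → ℝ) (u : PSpace n → ℝ) (z : PSpace n) (D : Fin (n+1) → ℝ) : ℝ :=
  ∫ y, KK k y * u (Phi z D y) ∂(PP (n+1))

def EI {n : ℕ} (k : Fin (n+1) → ℝ → ℝ) (u : PSpace n → ℝ) (z : PSpace n) (D : Fin (n+1) → ℝ)
    (i : Fin (n+1)) : ℝ :=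
  ∫ y, KK k y * u (Phi z D (Function.update y i 0)) ∂(PP (n+1))

/-- The kernel property. -/
def KerProp (M : ℕ) (C : ℝ) (k : ℝ → ℝ) : Prop :=
  Measurable k ∧ (∀ x, |k x| ≤ C) ∧ ∀ H : ℕ → ℝ → ℝ, (∀ j x, HasDerivAt (H j) (H (j+1) x) x) →
      |∫ t, k t * H 0 t ∂nu - H 0 0| ≤ C * ∫ t, |H M t| ∂nu

lemma KerProp.integral_eq {M : ℕ} (hM : 0 < M) {C : ℝ} {k : ℝ → ℝ} (h : KerProp M C k) :
    ∫ t, k t ∂nu = 1 := by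
  have := h.2.2 (fun j _ => if j = 0 then 1 else 0) (fun j x => by
    simpa using hasDerivAt_const x _)
  simp only [hM.ne', if_true, if_false, mul_one, abs_zero, integral_zero, mul_zero] at this
  linarith [abs_nonpos_iff.1 this]

lemma EI_update {n : ℕ} (k : Fin (n+1) → ℝ → ℝ) (u : PSpace n → ℝ) (z : PSpace n)
    (D : Fin (n+1) → ℝ) (i : Fin (n+1)) (b : ℝ) :
    EI k u z (Function.update D i b) i = EI k u z D i := by
  unfold EI
  congr 1
  funext y
  congr 2
  ext l
  by_cases h : l = i
  · subst h; simp [Phi_apply]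
  · simp [Phi_apply, h]

lemma step_bound {n : ℕ} (k : Fin (n+1) → ℝ → ℝ) (M : Fin (n+1) → ℕ) (hM : ∀ i, 0 < M i) (C : ℝ)
    (hC : 1 ≤ C)
    (hk : ∀ i, KerProp (M i) C (k i)) (u : PSpace n → ℝ) (hu : ContDiff ℝ (⊤ : ℕ∞) u)
    (z : PSpace n) (D : Fin (n+1) → ℝ) (i : Fin (n+1)) :
    |EE k u z D - EI k u z D i| ≤
      C ^ (n+1) * |D i| ^ (M i) * ∫ y, |(Dd i)^[M i] u (Phi z D y)| ∂(PP (n+1)) := by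
  have hku : ∀ i, Measurable (k i) := fun i => (hk i).1
  have hkC : ∀ i x, |k i x| ≤ C := fun i => (hk i).2.1
  have hcu := hu.continuous
  have hcΦ := continuous_Phi z D
  have hcg : Continuous fun y => |(Dd i)^[M i] u (Phi z D y)| :=
    ((contDiff_Dd_iter i u hu (M i)).continuous.comp hcΦ).abs
  have hc1 : Continuous fun y => u (Phi z D y) := hcu.comp hcΦ
  have hc2 : Continuous fun y => u (Phi z D (Function.update y i 0)) :=
    hcu.comp (hcΦ.comp (by fun_prop))
  have hi1 := integrable_KK_mul k hku C hkC _ hc1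
  have hi2 := integrable_KK_mul k hku C hkC _ hc2
  have hi3 : Integrable (fun y => KK k y * u (Phi z D y) -
      KK k y * u (Phi z D (Function.update y i 0))) (PP (n+1)) := hi1.sub hi2
  rw [EE, EI, ← integral_sub hi1 hi2, fubini_insert i _ hi3]
  have hG := integrable_insert i _ (integrable_PP _ hcg)
  have hG2 := hG.integral_prod_right
  have hfin : ∫ y', C^n * (C * (|D i| ^ (M i) *
        ∫ t, |(Dd i)^[M i] u (Phi z D (i.insertNth t y'))| ∂nu)) ∂(PP n) =
      C ^ (n+1) * |D i| ^ (M i) * ∫ y, |(Dd i)^[M i] u (Phi z D y)| ∂(PP (n+1)) := by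
    rw [fubini_insert i _ (integrable_PP _ hcg), integral_const_mul, integral_const_mul,
      integral_const_mul]
    ring
  rw [← hfin, ← Real.norm_eq_abs]
  apply norm_integral_le_of_norm_le
  · exact ((hG2.const_mul _).const_mul _).const_mul _
  refine Filter.Eventually.of_forall fun y' => ?_
  set H : ℕ → ℝ → ℝ := fun j t => D i ^ j * (Dd i)^[j] u (Phi z D (i.insertNth t y')) with hH
  have hHd : ∀ j x, HasDerivAt (H j) (H (j+1) x) x := fun j t => line_deriv i u hu z D y' j t
  have hHc : Continuous (H 0) := continuous_iff_continuousAt.2 fun x => (hHd 0 x).continuousAt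
  have key := (hk i).2.2 H hHd
  have hKi : Integrable (fun t => k i t * H 0 t) nu :=
    (integrable_nu _ hHc).bdd_mul (hku i).aestronglyMeasurable
      (Filter.Eventually.of_forall fun y => hkC i y)
  have hki : Integrable (k i) nu := by
    have := (integrable_nu (fun _ => (1:ℝ)) continuous_const).bdd_mul (hku i).aestronglyMeasurable
      (Filter.Eventually.of_forall fun y => hkC i y)
    simpa using this
  have e1 : ∫ t, (KK k (i.insertNth t y') * u (Phi z D (i.insertNth t y')) -
      KK k (i.insertNth t y') * u (Phi z D (Function.update (i.insertNth t y' : Fin (n+1) → ℝ) i 0))) ∂nu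
      = KK (fun j => k (i.succAbove j)) y' * (∫ t, k i t * H 0 t ∂nu - H 0 0) := by
    have : ∀ t, (KK k (i.insertNth t y') * u (Phi z D (i.insertNth t y')) -
      KK k (i.insertNth t y') * u (Phi z D (Function.update (i.insertNth t y' : Fin (n+1) → ℝ) i 0)))
      = KK (fun j => k (i.succAbove j)) y' * (k i t * H 0 t - k i t * H 0 0) := by
      intro t
      have hup : Function.update (i.insertNth t y' : Fin (n+1) → ℝ) i 0 = i.insertNth 0 y' := by
        simp
      rw [hup, hH]
      simp only [KK, Fin.prod_univ_succAbove _ i, Fin.insertNth_apply_same,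
        Fin.insertNth_apply_succAbove, pow_zero, one_mul, Function.iterate_zero, id]
      ring
    simp_rw [this]
    rw [integral_const_mul, integral_sub hKi (hki.mul_const _), integral_mul_const,
      (hk i).integral_eq (hM i), one_mul]
  rw [e1, Real.norm_eq_abs, abs_mul]
  refine mul_le_mul (KK_bound _ C (fun j => hkC _) y') ?_ (abs_nonneg _) (by positivity)
  refine key.trans (le_of_eq ?_)
  simp only [hH, abs_mul, abs_pow]
  rw [integral_const_mul]

lemma integrableOn_bdd {n : ℕ} {O : Set (PSpace n)} (hO : Bornology.IsBounded O)
    {F : PSpace n → ℝ} (hF : Continuous F) : IntegrableOn F O :=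
  (hF.continuousOn.integrableOn_compact hO.isCompact_closure).mono_set subset_closure

lemma L2norm_sq {n : ℕ} {O : Set (PSpace n)} (hO : Bornology.IsBounded O)
    {g : PSpace n → ℝ} (hg : Continuous g) : ∫ w in O, g w ^ 2 = L2norm O g ^ 2 := by
  have hm : MemLp g 2 (volume.restrict O) := by
    rw [memLp_two_iff_integrable_sq hg.aestronglyMeasurable]
    exact integrableOn_bdd hO (hg.pow 2)
  rw [L2norm, hm.eLpNorm_eq_integral_rpow_norm (by norm_num) (by norm_num)]
  rw [ENNReal.toReal_ofReal (by positivity)]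
  have h0 : 0 ≤ ∫ w in O, g w ^ 2 := integral_nonneg fun _ => sq_nonneg _
  simp only [ENNReal.toReal_ofNat, Real.rpow_ofNat, Real.norm_eq_abs, sq_abs]
  rw [← Real.rpow_natCast, ← Real.rpow_mul h0]
  norm_num

lemma L1_le_L2 {n : ℕ} {O : Set (PSpace n)} (hO : Bornology.IsBounded O)
    (hOm : MeasurableSet O)
    {g : PSpace n → ℝ} (hg : Continuous g) (z : PSpace n) (D : Fin (n+1) → ℝ) (hD : ∀ i, D i ≠ 0)
    (hsub : Phi z D '' ucube (n+1) ⊆ O) :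
    ∫ y, |g (Phi z D y)| ∂(PP (n+1)) ≤ √((∏ i, |D i|)⁻¹) * L2norm O g := by
  have hpos : 0 < ∏ i, |D i| := Finset.prod_pos fun i _ => abs_pos.2 (hD i)
  have hcg : Continuous fun y => g (Phi z D y) := hg.comp (continuous_Phi z D)
  set c := ∫ y, |g (Phi z D y)| ∂(PP (n+1)) with hc
  have hc0 : 0 ≤ c := integral_nonneg fun _ => abs_nonneg _
  have h1 : c ^ 2 ≤ ∫ y, g (Phi z D y) ^ 2 ∂(PP (n+1)) := by
    have h0 : 0 ≤ ∫ y, (|g (Phi z D y)| - c) ^ 2 ∂(PP (n+1)) := integral_nonneg fun _ => sq_nonneg _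
    have e : ∀ y, (|g (Phi z D y)| - c) ^ 2 = g (Phi z D y) ^ 2 - (2 * c * |g (Phi z D y)| - c ^ 2) := by
      intro y; rw [sub_sq, sq_abs]; ring
    have i1 : Integrable (fun y => 2 * c * |g (Phi z D y)|) (PP (n+1)) :=
      (integrable_PP _ hcg.abs).const_mul _
    have i2 : Integrable (fun y => 2 * c * |g (Phi z D y)| - c ^ 2) (PP (n+1)) :=
      i1.sub (integrable_const _)
    simp_rw [e] at h0
    rw [integral_sub (integrable_PP (fun y => g (Phi z D y) ^ 2) (hcg.pow 2)) i2, integral_sub i1 (integrable_const _),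
      integral_const_mul, ← hc] at h0
    simp at h0
    nlinarith
  rw [integral_Phi z D hD (fun w => g w ^ 2)] at h1
  have h2 : ∫ w in Phi z D '' ucube (n+1), g w ^ 2 ≤ L2norm O g ^ 2 := by
    rw [← L2norm_sq hO hg]
    exact setIntegral_mono_set (integrableOn_bdd hO (hg.pow 2))
      (Filter.Eventually.of_forall fun _ => sq_nonneg _) (Filter.Eventually.of_forall hsub)
  have hL : 0 ≤ L2norm O g := ENNReal.toReal_nonneg
  apply le_of_sq_le_sq _ (by positivity)
  rw [mul_pow, Real.sq_sqrt (by positivity)]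
  exact h1.trans (mul_le_mul_of_nonneg_left h2 (by positivity))

lemma box_mono {n : ℕ} (z : PSpace n) (D s : Fin (n+1) → ℝ) (hs : ∀ i, 0 < s i ∧ s i ≤ 1) :
    Phi z (fun i => D i * s i) '' ucube (n+1) ⊆ Phi z D '' ucube (n+1) := by
  rintro _ ⟨y, hy, rfl⟩
  refine ⟨fun i => s i * y i, fun i _ => ?_, ?_⟩
  · have := hy i trivial
    exact ⟨mul_pos (hs i).1 this.1, by nlinarith [(hs i).1, (hs i).2, this.1, this.2]⟩
  · ext i; simp only [Phi_apply]; ring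

/-- changing all scales -/
lemma scale_step {n : ℕ} (k : Fin (n+1) → ℝ → ℝ) (u : PSpace n → ℝ) (z : PSpace n)
    (D D' : Fin (n+1) → ℝ) (e : ℝ)
    (he : ∀ D'' : Fin (n+1) → ℝ, (∀ i, D'' i = D i ∨ D'' i = D' i) → ∀ i,
      |EE k u z D'' - EI k u z D'' i| ≤ e) :
    |EE k u z D' - EE k u z D| ≤ (n+1) * (2 * e) := by
  have key : ∀ S : Finset (Fin (n+1)),
      |EE k u z (fun i => if i ∈ S then D' i else D i) - EE k u z D| ≤ S.card * (2 * e) := by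
    intro S
    induction S using Finset.induction_on with
    | empty => simp
    | insert a S ha ih =>
      set X := fun i => if i ∈ S then D' i else D i with hX
      set Y := fun i => if i ∈ insert a S then D' i else D i with hY
      have hXY : Y = Function.update X a (D' a) := by
        ext i
        by_cases h : i = a
        · subst h; simp [hY]
        · simp [hX, hY, h]
      have h1 := he X (fun i => by by_cases h : i ∈ S <;> simp [hX, h]) a
      have h2 := he Y (fun i => by by_cases h : i ∈ insert a S <;> simp only [hY, h, if_true, if_false, or_true, true_or]) a
      have h3 : EI k u z Y a = EI k u z X a := by rw [hXY, EI_update]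
      rw [Finset.card_insert_of_notMem ha]
      push_cast
      rw [h3] at h2
      rw [abs_le] at *
      constructor <;> linarith [h1.1, h1.2, h2.1, h2.2, ih.1, ih.2]
  have := key Finset.univ
  simpa using this

lemma EE_tendsto {n : ℕ} (k : Fin (n+1) → ℝ → ℝ) (M : Fin (n+1) → ℕ) (hM : ∀ i, 0 < M i) (C : ℝ)
    (hk : ∀ i, KerProp (M i) C (k i)) (u : PSpace n → ℝ) (hu : Continuous u)
    (z : PSpace n) (D w : Fin (n+1) → ℝ) (hw : ∀ i, 0 < w i ∧ w i < 1) :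
    Filter.Tendsto (fun N : ℕ => EE k u z (fun i => D i * w i ^ N)) Filter.atTop (nhds (u z)) := by
  have hku : ∀ i, Measurable (k i) := fun i => (hk i).1
  have hkC : ∀ i x, |k i x| ≤ C := fun i => (hk i).2.1
  have hlim : u z = ∫ y, KK k y * u z ∂(PP (n+1)) := by
    rw [integral_mul_const]
    unfold KK PP
    rw [integral_fintype_prod_eq_prod]
    simp [fun i => (hk i).integral_eq (hM i)]
  rw [hlim]
  have hcomp : IsCompact (Phi z D '' Set.Icc 0 1) := isCompact_Icc.image (continuous_Phi z D)
  obtain ⟨B, hB⟩ := hcomp.exists_bound_of_continuousOn hu.continuousOn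
  apply tendsto_integral_of_dominated_convergence (fun _ => C ^ (n+1) * B)
  · intro N
    exact (integrable_KK_mul k hku C hkC _ (hu.comp (continuous_Phi z _))).aestronglyMeasurable
  · exact integrable_const _
  · intro N
    rw [PP_eq]
    refine (ae_restrict_iff' (measurableSet_ucube _)).2 (Filter.Eventually.of_forall fun y hy => ?_)
    have hmem : Phi z (fun i => D i * w i ^ N) y ∈ Phi z D '' Set.Icc 0 1 := by
      refine ⟨fun i => w i ^ N * y i, ⟨fun i => ?_, fun i => ?_⟩, ?_⟩
      · exact mul_nonneg (pow_nonneg (hw i).1.le _) (hy i trivial).1.le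
      · exact mul_le_one₀ (pow_le_one₀ (hw i).1.le (hw i).2.le) (hy i trivial).1.le (hy i trivial).2.le
      · ext i; simp only [Phi_apply]; ring
    rw [norm_mul]
    exact mul_le_mul (KK_bound k C hkC y) (hB _ hmem) (norm_nonneg _)
      ((abs_nonneg _).trans (KK_bound k C hkC y))
  · refine Filter.Eventually.of_forall fun y => ?_
    refine Filter.Tendsto.const_mul _ ?_
    refine (hu.tendsto z).comp ?_
    have : Filter.Tendsto (fun N : ℕ => Phi z (fun i => D i * w i ^ N) y) Filter.atTop
        (nhds (Phi z (fun _ => 0) y)) := by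
      unfold Phi
      refine tendsto_const_nhds.add ?_
      refine ((PiLp.continuous_toLp 2 _).tendsto _).comp ?_
      rw [tendsto_pi_nhds]
      intro i
      have := ((tendsto_pow_atTop_nhds_zero_of_lt_one (hw i).1.le (hw i).2).const_mul (D i)).mul_const (y i)
      simpa using this
    convert this using 2
    ext i; simp [Phi_apply]

lemma bmo_chain {n : ℕ} {O : Set (PSpace n)} (hO : Bornology.IsBounded O)
    (u : PSpace n → ℝ) (hu : Continuous u)
    (z : PSpace n) (D w : Fin (n+1) → ℝ) (hD : ∀ i, D i ≠ 0) (hw : ∀ i, 0 < w i ∧ w i < 1)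
    (hwp : ∏ i, w i = (1/4) ^ (n+2))
    (hsub : Phi z D '' ucube (n+1) ⊆ O) (b : ℝ)
    (hb : ∀ N : ℕ, ∫ y, |u (Phi z (fun i => D i * w i ^ N) y) -
      ∫ y', u (Phi z (fun i => D i * w i ^ N) y') ∂(PP (n+1))| ∂(PP (n+1)) ≤ b) (N : ℕ) :
    ∫ y, |u (Phi z (fun i => D i * w i ^ N) y)| ∂(PP (n+1)) ≤
      b + ((∏ i, |D i|)⁻¹ * ∫ w in O, |u w|) + N * (4 ^ (n+2) * b) := by
  set Φ : ℕ → (Fin (n+1) → ℝ) → PSpace n := fun N => Phi z (fun i => D i * w i ^ N) with hΦ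
  have hDN : ∀ N i, D i * w i ^ N ≠ 0 := fun N i => mul_ne_zero (hD i) (pow_ne_zero _ (hw i).1.ne')
  set a : ℕ → ℝ := fun N => ∫ y', u (Φ N y') ∂(PP (n+1)) with ha
  have hcont : ∀ N, Continuous fun y => u (Φ N y) := fun N => hu.comp (continuous_Phi z _)
  have hbox : ∀ N, Φ (N+1) '' ucube (n+1) ⊆ Φ N '' ucube (n+1) := by
    intro N
    have := box_mono z (fun i => D i * w i ^ N) w (fun i => ⟨(hw i).1, (hw i).2.le⟩)
    simpa only [hΦ, pow_succ, mul_assoc] using this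
  have hboxO : ∀ N, Φ N '' ucube (n+1) ⊆ O := by
    intro N
    induction N with
    | zero => simpa [hΦ] using hsub
    | succ N ih => exact (hbox N).trans ih
  have hprod : ∀ N, (∏ i, |D i * w i ^ (N+1)|) = (1/4) ^ (n+2) * ∏ i, |D i * w i ^ N| := by
    intro N
    rw [← hwp, ← Finset.prod_mul_distrib]
    refine Finset.prod_congr rfl fun i _ => ?_
    rw [pow_succ, ← mul_assoc, abs_mul _ (w i), abs_of_pos (hw i).1, mul_comm]
  have hstep : ∀ N, |a (N+1) - a N| ≤ 4 ^ (n+2) * b := by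
    intro N
    have e1 : a (N+1) - a N = ∫ y, (u (Φ (N+1) y) - a N) ∂(PP (n+1)) := by
      rw [integral_sub (integrable_PP _ (hcont _)) (integrable_const _)]
      simp [ha]
    rw [e1]
    refine (abs_integral_le_integral_abs).trans ?_
    have hpos : 0 < ∏ i, |D i * w i ^ N| := Finset.prod_pos fun i _ => abs_pos.2 (hDN N i)
    rw [hΦ, integral_Phi z _ (hDN (N+1)) (fun x => |u x - a N|), hprod N]
    have e2 := hb N
    have e3 := integral_Phi z _ (hDN N) (fun x => |u x - a N|)
    change ∫ y, |u (Φ N y) - a N| ∂(PP (n+1)) ≤ b at e2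
    change ∫ y, |u (Φ N y) - a N| ∂(PP (n+1)) = _ at e3
    rw [e3] at e2
    have e4 : ∫ x in Φ (N+1) '' ucube (n+1), |u x - a N| ≤ ∫ x in Φ N '' ucube (n+1), |u x - a N| :=
      setIntegral_mono_set (integrableOn_bdd (hO.subset (hboxO N)) (by fun_prop))
      (Filter.Eventually.of_forall fun _ => abs_nonneg _) (Filter.Eventually.of_forall (hbox N))
    rw [mul_inv, one_div, inv_pow, inv_inv, mul_assoc]
    refine mul_le_mul_of_nonneg_left ?_ (by positivity)
    exact (mul_le_mul_of_nonneg_left e4 (by positivity)).trans e2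
  have ha0 : |a 0| ≤ (∏ i, |D i|)⁻¹ * ∫ w in O, |u w| := by
    refine (abs_integral_le_integral_abs).trans ?_
    simp only [hΦ, pow_zero, mul_one]
    rw [integral_Phi z D hD (fun x => |u x|)]
    refine mul_le_mul_of_nonneg_left ?_ (by positivity)
    exact setIntegral_mono_set (integrableOn_bdd hO hu.abs)
      (Filter.Eventually.of_forall fun _ => abs_nonneg _) (Filter.Eventually.of_forall hsub)
  have haN : ∀ N : ℕ, |a N| ≤ ((∏ i, |D i|)⁻¹ * ∫ w in O, |u w|) + N * (4 ^ (n+2) * b) := by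
    intro N
    induction N with
    | zero => simpa using ha0
    | succ N ih =>
      have := abs_sub_abs_le_abs_sub (a (N+1)) (a N)
      push_cast
      linarith [hstep N]
  have hfin : ∫ y, |u (Φ N y)| ∂(PP (n+1)) ≤ ∫ y, (|u (Φ N y) - a N| + |a N|) ∂(PP (n+1)) := by
    apply integral_mono (integrable_PP _ (hcont N).abs)
    · exact integrable_PP _ ((((hcont N).sub continuous_const).abs).add continuous_const)
    · intro y
      have := abs_add_le (u (Φ N y) - a N) (a N)
      simpa using this
  rw [integral_add (integrable_PP (fun y => |u (Φ N y) - a N|) (((hcont N).sub continuous_const).abs)) (integrable_const _)] at hfin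
  simp only [integral_const, probReal_univ, one_smul] at hfin
  have := hb N
  change ∫ y, |u (Φ N y) - a N| ∂(PP (n+1)) ≤ b at this
  change ∫ y, |u (Φ N y)| ∂(PP (n+1)) ≤ _
  linarith [haN N]

lemma core_est {n m : ℕ} (hmn : n + 3 ≤ 4 * m) (k : Fin (n+1) → ℝ → ℝ) (M : Fin (n+1) → ℕ)
    (hM : ∀ i, 0 < M i) (C : ℝ) (hC : 1 ≤ C)
    (hk : ∀ i, KerProp (M i) C (k i)) (w : Fin (n+1) → ℝ) (hw : ∀ i, 0 < w i ∧ w i < 1)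
    (hwM : ∀ i, w i ^ M i = (1/16) ^ m)
    (hwp : ∏ i, w i = (1/4) ^ (n+2))
    {O : Set (PSpace n)} (hO : Bornology.IsBounded O) (hOm : MeasurableSet O)
    (u : PSpace n → ℝ) (hu : ContDiff ℝ (⊤ : ℕ∞) u)
    (z : PSpace n) (D : Fin (n+1) → ℝ) (hD : ∀ i, D i ≠ 0) (hD1 : ∀ i, |D i| ≤ 1)
    (hsub : Phi z D '' ucube (n+1) ⊆ O) (b W : ℝ)
    (hb : ∀ N : ℕ, ∫ y, |u (Phi z (fun i => D i * w i ^ N) y) -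
      ∫ y', u (Phi z (fun i => D i * w i ^ N) y') ∂(PP (n+1))| ∂(PP (n+1)) ≤ b)
    (hW : ∀ i, L2norm O ((Dd i)^[M i] u) ≤ W) (N : ℕ) :
    |u z| ≤ C ^ (n+1) * (b + ((∏ i, |D i|)⁻¹ * ∫ w in O, |u w|) + N * (4 ^ (n+2) * b)) +
      (4 * (n+1) * C ^ (n+1) * √((∏ i, |D i|)⁻¹) * 2 ^ (n+2)) * W / 2 ^ N := by
  have hku : ∀ i, Measurable (k i) := fun i => (hk i).1
  have hkC : ∀ i x, |k i x| ≤ C := fun i => (hk i).2.1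
  have hW0 : 0 ≤ W := le_trans ENNReal.toReal_nonneg (hW 0)
  set A := ∏ i, |D i| with hA
  have hA0 : 0 < A := Finset.prod_pos fun i _ => abs_pos.2 (hD i)
  have hstep : ∀ j : ℕ, dist (EE k u z (fun i => D i * w i ^ j)) (EE k u z (fun i => D i * w i ^ (j+1)))
      ≤ (4 * (n+1) * C ^ (n+1) * √(A⁻¹) * 2 ^ (n+2)) * W / 2 / 2 ^ j := by
    intro j
    rw [dist_comm, Real.dist_eq]
    refine (scale_step k u z _ _ (C ^ (n+1) * √(A⁻¹) * 2 ^ (n+2) * W / 2 ^ j) ?_).trans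
      (le_of_eq (by ring))
    intro D'' hD'' i
    have hs : ∃ s : Fin (n+1) → ℝ, (D'' = fun i => D i * s i) ∧
        ∀ i, w i ^ (j+1) ≤ s i ∧ s i ≤ w i ^ j := by
      have : ∀ i, ∃ s : ℝ, D'' i = D i * s ∧ w i ^ (j+1) ≤ s ∧ s ≤ w i ^ j := by
        intro i
        have hle : w i ^ (j+1) ≤ w i ^ j := pow_le_pow_of_le_one (hw i).1.le (hw i).2.le (by omega)
        rcases hD'' i with h | h
        · exact ⟨_, h, hle, le_rfl⟩
        · exact ⟨_, h, le_rfl, hle⟩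
      choose s h1 h2 using this
      exact ⟨s, funext h1, h2⟩
    obtain ⟨s, rfl, hs⟩ := hs
    have hs0 : ∀ i, 0 < s i := fun i => lt_of_lt_of_le (pow_pos (hw i).1 _) (hs i).1
    have hs1 : ∀ i, s i ≤ 1 := fun i => (hs i).2.trans (pow_le_one₀ (hw i).1.le (hw i).2.le)
    have hne : ∀ i, D i * s i ≠ 0 := fun i => mul_ne_zero (hD i) (hs0 i).ne'
    have hbox := (box_mono z D s (fun i => ⟨hs0 i, hs1 i⟩)).trans hsub
    refine (step_bound k M hM C hC hk u hu z _ i).trans ?_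
    have hL := L1_le_L2 hO hOm (contDiff_Dd_iter i u hu (M i)).continuous z _ hne hbox
    have hp1 : |D i * s i| ^ M i ≤ ((1/16) ^ m) ^ j := by
      rw [show ((1/16 : ℝ) ^ m) ^ j = (w i ^ j) ^ M i by rw [← hwM i, ← pow_mul, ← pow_mul, mul_comm]]
      refine pow_le_pow_left₀ (abs_nonneg _) ?_ _
      rw [abs_mul, abs_of_pos (hs0 i)]
      exact (mul_le_of_le_one_left (hs0 i).le (hD1 i)).trans (hs i).2
    have hp2 : A * ((1/4) ^ (n+2)) ^ (j+1) ≤ ∏ i, |D i * s i| := by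
      rw [hA, ← hwp, ← Finset.prod_pow, ← Finset.prod_mul_distrib]
      refine Finset.prod_le_prod (fun i _ => mul_nonneg (abs_nonneg _) (pow_nonneg (hw i).1.le _)) fun i _ => ?_
      rw [abs_mul, abs_of_pos (hs0 i)]
      exact mul_le_mul_of_nonneg_left (hs i).1 (abs_nonneg _)
    have hp3 : √((∏ i, |D i * s i|)⁻¹) ≤ √(A⁻¹) * (2 ^ (n+2)) ^ (j+1) := by
      rw [show √(A⁻¹) * (2 ^ (n+2)) ^ (j+1) = √((A * ((1/4) ^ (n+2)) ^ (j+1))⁻¹) by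
        rw [mul_inv, Real.sqrt_mul (by positivity)]
        congr 1
        symm
        rw [Real.sqrt_eq_iff_mul_self_eq (by positivity) (by positivity)]
        rw [one_div, inv_pow, inv_pow, inv_inv, ← mul_pow, ← mul_pow]
        norm_num]
      apply Real.sqrt_le_sqrt
      exact inv_anti₀ (by positivity) hp2
    have hp4 : ((1/16 : ℝ) ^ m) ^ j * (2 ^ (n+2)) ^ (j+1) ≤ 2 ^ (n+2) / 2 ^ j := by
      rw [le_div_iff₀ (by positivity), one_div, inv_pow, inv_pow, pow_succ,
        show (((16:ℝ) ^ m) ^ j)⁻¹ * ((2 ^ (n+2)) ^ j * 2 ^ (n+2)) * 2 ^ j =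
          (((2 ^ (n+2)) ^ j * 2 ^ j) / ((16:ℝ) ^ m) ^ j) * 2 ^ (n+2) by ring]
      refine mul_le_of_le_one_left (by positivity) ?_
      rw [div_le_one (by positivity), ← mul_pow, ← pow_succ]
      refine pow_le_pow_left₀ (by positivity) ?_ _
      rw [show (16:ℝ) = 2 ^ 4 by norm_num, ← pow_mul]
      exact pow_le_pow_right₀ (by norm_num) (by omega)
    calc C ^ (n+1) * |D i * s i| ^ M i * ∫ y, |(Dd i)^[M i] u (Phi z (fun i => D i * s i) y)| ∂(PP (n+1))
        ≤ C ^ (n+1) * ((1/16) ^ m) ^ j * ((√(A⁻¹) * (2 ^ (n+2)) ^ (j+1)) * W) := by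
          refine mul_le_mul (mul_le_mul_of_nonneg_left hp1 (by positivity)) ?_
            (integral_nonneg fun _ => abs_nonneg _) (by positivity)
          exact hL.trans (mul_le_mul hp3 (hW i) ENNReal.toReal_nonneg (by positivity))
      _ = (C ^ (n+1) * √(A⁻¹) * W) * (((1/16 : ℝ) ^ m) ^ j * (2 ^ (n+2)) ^ (j+1)) := by ring
      _ ≤ (C ^ (n+1) * √(A⁻¹) * W) * (2 ^ (n+2) / 2 ^ j) :=
          mul_le_mul_of_nonneg_left hp4 (by positivity)
      _ = _ := by ring
  have hlim := dist_le_of_le_geometric_two_of_tendsto hstep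
    (EE_tendsto k M hM C hk u hu.continuous z D w hw) N
  rw [dist_comm, Real.dist_eq] at hlim
  have hEE : |EE k u z (fun i => D i * w i ^ N)| ≤ C ^ (n+1) *
      ∫ y, |u (Phi z (fun i => D i * w i ^ N) y)| ∂(PP (n+1)) := by
    rw [← integral_const_mul, ← Real.norm_eq_abs]
    apply norm_integral_le_of_norm_le
    · exact (integrable_PP _ (hu.continuous.comp (continuous_Phi z _)).abs).const_mul _
    · refine Filter.Eventually.of_forall fun y => ?_
      rw [norm_mul]
      exact mul_le_mul_of_nonneg_right (KK_bound k C hkC y) (norm_nonneg _)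
  have hch := bmo_chain hO u hu.continuous z D w hD hw hwp hsub b hb N
  have h1 := abs_sub_abs_le_abs_sub (u z) (EE k u z (fun i => D i * w i ^ N))
  have h2 := hEE.trans (mul_le_mul_of_nonneg_left hch (by positivity))
  linarith

lemma pnorm_lt_iff {n : ℕ} (hn : 1 ≤ n) (z : PSpace n) (r : ℝ) (hr : 0 < r) :
    pnorm z < r ↔ (∀ i : Fin n, |z i.castSucc| < r) ∧ |z (Fin.last n)| < r ^ 2 := by
  have : Nonempty (Fin n) := ⟨⟨0, hn⟩⟩
  unfold pnorm
  rw [max_lt_iff, Real.sqrt_lt' hr]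
  refine and_congr_left fun _ => ⟨fun h i => ?_, fun h => ?_⟩
  · exact (le_ciSup (f := fun i : Fin n => |z i.castSucc|) (Set.finite_range _).bddAbove i).trans_lt h
  · obtain ⟨i, hi⟩ := exists_eq_ciSup_of_finite (f := fun i : Fin n => |z i.castSucc|)
    rw [← hi]; exact h i

lemma box_mem {n : ℕ} (z : PSpace n) (D : Fin (n+1) → ℝ) (hD : ∀ i, D i ≠ 0) (x : PSpace n) :
    x ∈ Phi z D '' ucube (n+1) ↔ ∀ i, |x i - (z i + D i * (1/2))| < |D i| * (1/2) := by
  have key : ∀ (a d y : ℝ), d ≠ 0 → (|(a + d * y) - (a + d * (1/2))| < |d| * (1/2) ↔ y ∈ Set.Ioo (0:ℝ) 1) := by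
    intro a d y hd
    rw [show (a + d * y) - (a + d * (1/2)) = d * (y - 1/2) by ring, abs_mul,
      mul_lt_mul_iff_right₀ (abs_pos.2 hd), abs_lt, Set.mem_Ioo]
    constructor <;> rintro ⟨h1, h2⟩ <;> constructor <;> linarith
  constructor
  · rintro ⟨y, hy, rfl⟩ i
    rw [Phi_apply, key _ _ _ (hD i)]
    exact hy i trivial
  · intro h
    refine ⟨fun i => (x i - z i) / D i, fun i _ => ?_, ?_⟩
    · rw [← key (z i) (D i) _ (hD i), mul_div_cancel₀ _ (hD i)]
      simpa using h i
    · ext i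
      rw [Phi_apply, mul_div_cancel₀ _ (hD i)]
      ring

lemma box_eq_pCube {n : ℕ} (hn : 1 ≤ n) (z : PSpace n) (D : Fin (n+1) → ℝ) (r : ℝ) (hr : 0 < r)
    (h1 : ∀ i : Fin n, |D i.castSucc| = 2 * r) (h2 : |D (Fin.last n)| = 2 * r ^ 2) :
    Phi z D '' ucube (n+1) = pCube (Phi z D (fun _ => 1/2)) r := by
  have hD : ∀ i, D i ≠ 0 := by
    intro i
    rw [← abs_pos]
    refine Fin.lastCases ?_ (fun i => ?_) i
    · rw [h2]; positivity
    · rw [h1]; positivity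
  ext x
  rw [box_mem z D hD, pCube, Set.mem_ofPred_eq, pnorm_lt_iff hn _ _ hr, Fin.forall_fin_succ']
  simp only [PiLp.sub_apply, Phi_apply, h1, h2]
  have e1 : 2 * r * (1/2) = r := by ring
  have e2 : 2 * r ^ 2 * (1/2) = r ^ 2 := by ring
  simp only [e1, e2]

lemma average_box {n : ℕ} (z : PSpace n) (D : Fin (n+1) → ℝ) (hD : ∀ i, D i ≠ 0)
    (F : PSpace n → ℝ) :
    ⨍ w in Phi z D '' ucube (n+1), F w = ∫ y, F (Phi z D y) ∂(PP (n+1)) := by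
  have hpos : 0 < ∏ i, |D i| := Finset.prod_pos fun i _ => abs_pos.2 (hD i)
  have h1 := integral_Phi z D hD (fun _ => 1)
  simp only [integral_const, probReal_univ, smul_eq_mul, mul_one, measureReal_restrict_apply_univ] at h1
  rw [setAverage_eq, integral_Phi z D hD F, smul_eq_mul]
  congr 2
  field_simp at h1
  exact h1.symm

lemma cube_eq_box {n : ℕ} (hn : 1 ≤ n) (z₀ : PSpace n) (r : ℝ) (hr : 0 < r) :
    ∃ (z : PSpace n) (D : Fin (n+1) → ℝ), (∀ i, D i ≠ 0) ∧ pCube z₀ r = Phi z D '' ucube (n+1) := by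
  set D : Fin (n+1) → ℝ := Fin.lastCases (2 * r ^ 2) (fun _ => 2 * r) with hDd
  have h1 : ∀ i : Fin n, D i.castSucc = 2 * r := fun i => by simp [hDd]
  have h2 : D (Fin.last n) = 2 * r ^ 2 := by simp [hDd]
  refine ⟨Phi z₀ D (fun _ => -(1/2)), D, fun i => ?_, ?_⟩
  · refine Fin.lastCases ?_ (fun i => ?_) i
    · rw [h2]; positivity
    · rw [h1]; positivity
  · rw [box_eq_pCube hn _ D r hr (fun i => by rw [h1, abs_of_pos (by positivity)])
      (by rw [h2, abs_of_pos (by positivity)])]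
    congr 1
    ext i
    simp only [Phi_apply]
    ring

lemma oscSet_bdd {n : ℕ} (hn : 1 ≤ n) {O : Set (PSpace n)} (hO : Bornology.IsBounded O)
    (u : PSpace n → ℝ) (hu : Continuous u) : BddAbove (oscSet O u) := by
  obtain ⟨B, hB⟩ := hO.isCompact_closure.exists_bound_of_continuousOn hu.continuousOn
  refine ⟨2 * B, ?_⟩
  rintro v ⟨z₀, r, hr, hsub, rfl⟩
  obtain ⟨z, D, hD, e⟩ := cube_eq_box hn z₀ r hr
  rw [e] at hsub ⊢
  rw [average_box z D hD, average_box z D hD]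
  have hae : ∀ᵐ y ∂(PP (n+1)), ‖u (Phi z D y)‖ ≤ B := by
    rw [PP_eq]
    filter_upwards [ae_restrict_mem (measurableSet_ucube _)] with y hy
    exact hB _ (subset_closure (hsub ⟨y, hy, rfl⟩))
  have h2 : ‖∫ y, u (Phi z D y) ∂(PP (n+1))‖ ≤ B := by
    simpa using norm_integral_le_of_norm_le_const hae
  refine (le_abs_self _).trans ?_
  rw [← Real.norm_eq_abs]
  have h3 : ∀ᵐ y ∂(PP (n+1)), ‖|u (Phi z D y) - ∫ y, u (Phi z D y) ∂(PP (n+1))|‖ ≤ 2 * B := by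
    filter_upwards [hae] with y hy
    rw [Real.norm_eq_abs, abs_abs]
    refine (norm_sub_le (u (Phi z D y)) _).trans ?_
    linarith
  simpa using norm_integral_le_of_norm_le_const h3

lemma pBMO_nonneg {n : ℕ} (O : Set (PSpace n)) (u : PSpace n → ℝ) : 0 ≤ pBMO O u := by
  apply Real.sSup_nonneg
  rintro v ⟨z₀, r, hr, hsub, rfl⟩
  rw [setAverage_eq]
  exact smul_nonneg (by positivity) (integral_nonneg fun _ => abs_nonneg _)

lemma L2norm_nonneg {n : ℕ} (O : Set (PSpace n)) (u : PSpace n → ℝ) : 0 ≤ L2norm O u :=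
  ENNReal.toReal_nonneg

lemma L2_le_sob {n m : ℕ} (O : Set (PSpace n)) (u : PSpace n → ℝ) (r s : ℕ) (α : Fin n → ℕ)
    (hα : ∑ i, α i = s) (h : 2 * r + s ≤ 2 * m) :
    L2norm O (mixDeriv r α u) ≤ sobNorm m O u := by
  unfold sobNorm
  have h1 := Finset.single_le_sum (f := fun p : ℕ × ℕ => ∑ α ∈ Finset.Nat.antidiagonalTuple n p.2,
    L2norm O (mixDeriv p.1 α u)) (s := (Finset.range (2 * m + 1) ×ˢ Finset.range (2 * m + 1)).filter
      (fun p => 2 * p.1 + p.2 ≤ 2 * m)) (fun p _ => Finset.sum_nonneg fun _ _ => L2norm_nonneg _ _)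
    (a := (r, s)) (by simp; omega)
  refine le_trans ?_ h1
  exact Finset.single_le_sum (f := fun α => L2norm O (mixDeriv r α u))
    (fun _ _ => L2norm_nonneg _ _) (Finset.Nat.mem_antidiagonalTuple.2 hα)

lemma foldr_zero {n : ℕ} (α : Fin n → ℕ) (u : PSpace n → ℝ) (l : List (Fin n))
    (h : ∀ i ∈ l, α i = 0) : l.foldr (fun i v => (Dx i)^[α i] v) u = u := by
  induction l with
  | nil => rfl
  | cons a l ih =>
    rw [List.foldr_cons, ih fun i hi => h i (List.mem_cons_of_mem _ hi), h a (by simp)]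
    rfl

lemma foldr_single {n : ℕ} (i : Fin n) (k : ℕ) (u : PSpace n → ℝ) (l : List (Fin n))
    (hl : l.Nodup) (hi : i ∈ l) :
    l.foldr (fun j v => (Dx j)^[(Pi.single i k : Fin n → ℕ) j] v) u = (Dx i)^[k] u := by
  induction l with
  | nil => simp at hi
  | cons a l ih =>
    rw [List.nodup_cons] at hl
    rw [List.foldr_cons]
    by_cases ha : a = i
    · subst ha
      rw [foldr_zero]
      · simp
      · intro j hj
        have : j ≠ a := fun e => hl.1 (e ▸ hj)
        simp [this]
    · rw [ih hl.2 ((List.mem_cons.1 hi).resolve_left (Ne.symm ha))]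
      simp [ha]

lemma L2_space_le {n m : ℕ} (O : Set (PSpace n)) (u : PSpace n → ℝ) (i : Fin n) :
    L2norm O ((Dd i.castSucc)^[2 * m] u) ≤ sobNorm m O u := by
  have h := L2_le_sob (m := m) O u 0 (2 * m) (Pi.single i (2 * m)) (by simp) (by omega)
  unfold mixDeriv DxPow at h
  rw [foldr_single i _ u _ (List.nodup_finRange n) (List.mem_finRange i)] at h
  exact h

lemma L2_time_le {n m : ℕ} (O : Set (PSpace n)) (u : PSpace n → ℝ) :
    L2norm O ((Dd (Fin.last n))^[m] u) ≤ sobNorm m O u := by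
  have h := L2_le_sob (m := m) O u m 0 0 (by simp) (by omega)
  unfold mixDeriv DxPow at h
  rw [foldr_zero _ _ _ (by simp)] at h
  exact h

lemma eqOn_Dd {n : ℕ} {V : Set (PSpace n)} (hV : IsOpen V) (i : Fin (n+1)) {u v : PSpace n → ℝ}
    (h : Set.EqOn u v V) : Set.EqOn (Dd i u) (Dd i v) V := by
  intro z hz
  have : u =ᶠ[nhds z] v := Filter.eventuallyEq_of_mem (hV.mem_nhds hz) h
  simp only [Dd, this.fderiv_eq]

lemma eqOn_Dd_iter {n : ℕ} {V : Set (PSpace n)} (hV : IsOpen V) (i : Fin (n+1)) (k : ℕ)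
    {u v : PSpace n → ℝ} (h : Set.EqOn u v V) : Set.EqOn ((Dd i)^[k] u) ((Dd i)^[k] v) V := by
  induction k generalizing u v with
  | zero => exact h
  | succ k ih => exact ih (eqOn_Dd hV i h)

lemma eqOn_mixDeriv {n : ℕ} {V : Set (PSpace n)} (hV : IsOpen V) (r : ℕ) (α : Fin n → ℕ)
    {u v : PSpace n → ℝ} (h : Set.EqOn u v V) : Set.EqOn (mixDeriv r α u) (mixDeriv r α v) V := by
  have h1 : Set.EqOn (DxPow α u) (DxPow α v) V := by
    unfold DxPow
    induction List.finRange n with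
    | nil => exact h
    | cons a l ih => exact eqOn_Dd_iter hV a.castSucc (α a) ih
  exact eqOn_Dd_iter hV (Fin.last n) r h1

lemma sobNorm_congr {n m : ℕ} {O : Set (PSpace n)} (hV : IsOpen O)
    {u v : PSpace n → ℝ} (h : Set.EqOn u v O) : sobNorm m O u = sobNorm m O v := by
  unfold sobNorm
  refine Finset.sum_congr rfl fun p _ => Finset.sum_congr rfl fun α _ => ?_
  unfold L2norm
  rw [eLpNorm_congr_ae]
  filter_upwards [ae_restrict_mem hV.measurableSet] with x hx
  exact eqOn_mixDeriv hV _ _ h hx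

lemma measurableSet_pCube {n : ℕ} (hn : 1 ≤ n) (z₀ : PSpace n) (r : ℝ) (hr : 0 < r) :
    MeasurableSet (pCube z₀ r) := by
  obtain ⟨z, D, hD, e⟩ := cube_eq_box hn z₀ r hr
  rw [e]
  exact (Phi_embedding z D hD).measurableSet_image.2 (measurableSet_ucube _)

lemma pBMO_congr {n : ℕ} (hn : 1 ≤ n) {O : Set (PSpace n)}
    {u v : PSpace n → ℝ} (h : Set.EqOn u v O) : pBMO O u = pBMO O v := by
  unfold pBMO
  congr 1
  ext x
  unfold oscSet
  simp only [Set.mem_ofPred_eq]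
  refine exists_congr fun z₀ => exists_congr fun r => and_congr_right fun hr =>
    and_congr_right fun hs => ?_
  have hm := measurableSet_pCube hn z₀ r hr
  have e1 : ⨍ w in pCube z₀ r, u w = ⨍ w in pCube z₀ r, v w := by
    rw [setAverage_eq, setAverage_eq, setIntegral_congr_fun hm fun w hw => h (hs hw)]
  rw [e1]
  generalize (⨍ w in pCube z₀ r, v w) = c
  rw [setAverage_eq, setAverage_eq, setIntegral_congr_fun (g := fun w => |v w - c|) hm fun w hw => by
    show |u w - c| = |v w - c|
    rw [h (hs hw)]]

lemma isOpen_OmegaT (n : ℕ) (T : ℝ) : IsOpen (OmegaT n T) := by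
  have : OmegaT n T = (⋂ i : Fin n, {z : PSpace n | z i.castSucc ∈ Set.Ioo (0:ℝ) 1}) ∩
      {z : PSpace n | z (Fin.last n) ∈ Set.Ioo 0 T} := by
    ext z; simp [OmegaT]
  rw [this]
  refine IsOpen.inter (isOpen_iInter_of_finite fun i => ?_) ?_
  · exact isOpen_Ioo.preimage (f := fun z : PSpace n => z i.castSucc) (by fun_prop)
  · exact isOpen_Ioo.preimage (f := fun z : PSpace n => z (Fin.last n)) (by fun_prop)

lemma isBounded_OmegaT (n : ℕ) (T : ℝ) : Bornology.IsBounded (OmegaT n T) := by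
  have hK : IsCompact (WithLp.toLp 2 '' (Set.univ.pi fun _ : Fin (n+1) => Set.Icc (0:ℝ) (max 1 T)) :
      Set (PSpace n)) :=
    (isCompact_univ_pi fun _ => isCompact_Icc).image (PiLp.continuous_toLp 2 _)
  refine hK.isBounded.subset fun z hz => ⟨z.ofLp, fun i _ => ?_, rfl⟩
  refine Fin.lastCases ?_ (fun i => ?_) i
  · exact ⟨hz.2.1.le, hz.2.2.le.trans (le_max_right _ _)⟩
  · exact ⟨(hz.1 i).1.le, (hz.1 i).2.le.trans (le_max_left _ _)⟩

lemma KerProp.mono {M : ℕ} {C C' : ℝ} (h : C ≤ C') {k : ℝ → ℝ} (hk : KerProp M C k) :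
    KerProp M C' k :=
  ⟨hk.1, fun x => (hk.2.1 x).trans h, fun H hH => (hk.2.2 H hH).trans
    (mul_le_mul_of_nonneg_right h (integral_nonneg fun _ => abs_nonneg _))⟩

lemma kernels {n m : ℕ} (hm : 0 < m) : ∃ (k : Fin (n+1) → ℝ → ℝ) (M : Fin (n+1) → ℕ) (C : ℝ)
    (w : Fin (n+1) → ℝ), (∀ i : Fin n, M i.castSucc = 2 * m) ∧ M (Fin.last n) = m ∧ 1 ≤ C ∧
    (∀ i, KerProp (M i) C (k i)) ∧ (∀ i : Fin n, w i.castSucc = 1/4) ∧ w (Fin.last n) = 1/16 := by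
  obtain ⟨k1, C1, h1, p1⟩ := kernel_exists m hm
  obtain ⟨k2, C2, h2, p2⟩ := kernel_exists (2 * m) (by omega)
  refine ⟨Fin.lastCases k1 (fun _ => k2), Fin.lastCases m (fun _ => 2 * m), max C1 C2,
    Fin.lastCases (1/16) (fun _ => 1/4), by simp, by simp, h1.trans (le_max_left _ _), ?_,
    by simp, by simp⟩
  intro i
  refine Fin.lastCases ?_ (fun i => ?_) i
  · simp only [Fin.lastCases_last]
    exact KerProp.mono (le_max_left _ _) p1
  · simp only [Fin.lastCases_castSucc]
    exact KerProp.mono (le_max_right _ _) p2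

lemma corner (x L d : ℝ) (hx : x ∈ Set.Ioo 0 L) (hd : 0 < d) (hdL : d ≤ L / 2) :
    ∃ D : ℝ, |D| = d ∧ ∀ y ∈ Set.Ioo (0:ℝ) 1, x + D * y ∈ Set.Ioo 0 L := by
  obtain ⟨hx0, hx1⟩ := hx
  by_cases h : x ≤ L / 2
  · refine ⟨d, abs_of_pos hd, fun y hy => ⟨?_, ?_⟩⟩
    · nlinarith [mul_pos hd hy.1]
    · nlinarith [mul_pos hd (sub_pos.2 hy.2)]
  · refine ⟨-d, by rw [abs_neg, abs_of_pos hd], fun y hy => ⟨?_, ?_⟩⟩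
    · nlinarith [mul_pos hd (sub_pos.2 hy.2)]
    · nlinarith [mul_pos hd hy.1]

lemma log_choice (W : ℝ) : ∃ N : ℕ, W ≤ 2 ^ N ∧ (N : ℝ) ≤ 2 * (1 + logPlus W) := by
  have h2 : (1/2 : ℝ) < Real.log 2 := by linarith [Real.log_two_gt_d9]
  have hl : 0 ≤ logPlus W := le_max_right _ _
  refine ⟨⌈logPlus W / Real.log 2⌉₊, ?_, ?_⟩
  · by_cases hW : W ≤ 0
    · exact hW.trans (by positivity)
    push Not at hW
    have h3 := Nat.le_ceil (logPlus W / Real.log 2)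
    rw [div_le_iff₀ (by linarith)] at h3
    have h4 : Real.log W ≤ logPlus W := le_max_left _ _
    rw [← Real.log_le_log_iff hW (by positivity), Real.log_pow]
    linarith
  · have h3 := (Nat.ceil_lt_add_one (a := logPlus W / Real.log 2) (by positivity)).le
    have h4 : logPlus W / Real.log 2 ≤ 2 * logPlus W := by
      rw [div_le_iff₀ (by linarith)]
      nlinarith
    linarith

lemma smooth_case (n m : ℕ) (hn : 1 ≤ n) (hm : 0 < m)
    (hmn : ((n : ℝ) + 2) / 4 < m) (T : ℝ) (hT : 0 < T) :
    ∃ C : ℝ, 0 < C ∧ ∀ (u : PSpace n → ℝ), ContDiff ℝ (⊤ : ℕ∞) u → ∀ z ∈ OmegaT n T,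
      |u z| ≤ C * (1 + (pBMO (OmegaT n T) u + ∫ z in OmegaT n T, |u z|) *
          (1 + logPlus (sobNorm m (OmegaT n T) u))) := by
  have hmn' : n + 3 ≤ 4 * m := by
    have : (n : ℝ) + 2 < 4 * m := by linarith
    have : n + 2 < 4 * m := by exact_mod_cast this
    omega
  obtain ⟨k, M, C, w, hM1, hM2, hC, hk, hw1, hw2⟩ := kernels (n := n) hm
  have hM : ∀ i, 0 < M i := by
    intro i
    refine Fin.lastCases ?_ (fun i => ?_) i
    · rw [hM2]; exact hm
    · rw [hM1]; omega
  have hw : ∀ i, 0 < w i ∧ w i < 1 := by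
    intro i
    refine Fin.lastCases ?_ (fun i => ?_) i
    · rw [hw2]; norm_num
    · rw [hw1]; norm_num
  have hwM : ∀ i, w i ^ M i = (1/16) ^ m := by
    intro i
    refine Fin.lastCases ?_ (fun i => ?_) i
    · rw [hw2, hM2]
    · rw [hw1, hM1, pow_mul]; norm_num
  have hwp : ∏ i, w i = (1/4) ^ (n+2) := by
    rw [Fin.prod_univ_castSucc, hw2]
    simp only [hw1, Finset.prod_const, Finset.card_univ, Fintype.card_fin]
    rw [pow_add]; norm_num
  obtain ⟨r, hr0, hr1, hr2⟩ : ∃ r : ℝ, 0 < r ∧ r ≤ 1/8 ∧ r ≤ T/8 :=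
    ⟨min (1/8) (T/8), lt_min (by norm_num) (by linarith), min_le_left _ _, min_le_right _ _⟩
  have hrT : r ^ 2 ≤ T / 8 := by nlinarith
  have hr8 : r ^ 2 ≤ 1 / 8 := by nlinarith
  set A : ℝ := (2 * r) ^ n * (2 * r ^ 2) with hA
  have hA0 : 0 < A := by positivity
  set K2 : ℝ := 4 * (n+1) * C ^ (n+1) * √(A⁻¹) * 2 ^ (n+2) with hK2
  have hK20 : 0 < K2 := by
    have := Real.sqrt_pos.2 (inv_pos.2 hA0)
    positivity
  have hC0 : 0 < C ^ (n+1) := by positivity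
  refine ⟨C ^ (n+1) * (1 + A⁻¹ + 2 * 4 ^ (n+2)) + K2, by positivity, fun u hu z hz => ?_⟩
  have hO := isBounded_OmegaT n T
  -- the corner box
  have hD : ∃ D : Fin (n+1) → ℝ, (∀ i : Fin n, |D i.castSucc| = 2 * r) ∧
      |D (Fin.last n)| = 2 * r ^ 2 ∧ Phi z D '' ucube (n+1) ⊆ OmegaT n T := by
    choose Ds hDs1 hDs2 using fun i : Fin n => corner (z i.castSucc) 1 (2 * r) (hz.1 i)
      (by positivity) (by linarith)
    obtain ⟨Dl, hl1, hl2⟩ := corner (z (Fin.last n)) T (2 * r ^ 2) hz.2 (by positivity) (by linarith)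
    refine ⟨Fin.lastCases Dl Ds, by simpa using hDs1, by simpa using hl1, ?_⟩
    rintro x ⟨y, hy, rfl⟩
    refine ⟨fun i => ?_, ?_⟩
    · rw [Phi_apply, Fin.lastCases_castSucc]
      exact hDs2 i _ (hy _ trivial)
    · rw [Phi_apply, Fin.lastCases_last]
      exact hl2 _ (hy _ trivial)
  obtain ⟨D, hD1, hD2, hsub⟩ := hD
  have hDA : ∏ i, |D i| = A := by
    rw [Fin.prod_univ_castSucc, hD2]
    simp [hD1, hA]
  have hD0 : ∀ i, D i ≠ 0 := by
    intro i
    rw [← abs_pos]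
    refine Fin.lastCases ?_ (fun i => ?_) i
    · rw [hD2]; positivity
    · rw [hD1]; positivity
  have hDle : ∀ i, |D i| ≤ 1 := by
    intro i
    refine Fin.lastCases ?_ (fun i => ?_) i
    · rw [hD2]; linarith
    · rw [hD1]; linarith
  have hb : ∀ N : ℕ, ∫ y, |u (Phi z (fun i => D i * w i ^ N) y) -
      ∫ y', u (Phi z (fun i => D i * w i ^ N) y') ∂(PP (n+1))| ∂(PP (n+1)) ≤ pBMO (OmegaT n T) u := by
    intro N
    have hne : ∀ i, D i * w i ^ N ≠ 0 := fun i => mul_ne_zero (hD0 i) (pow_ne_zero _ (hw i).1.ne')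
    have hbox := box_mono z D (fun i => w i ^ N)
      (fun i => ⟨pow_pos (hw i).1 _, pow_le_one₀ (hw i).1.le (hw i).2.le⟩)
    have hcube := box_eq_pCube hn z (fun i => D i * w i ^ N) (r * (1/4) ^ N) (by positivity)
      (fun i => by rw [abs_mul, hD1, hw1, abs_of_pos (by positivity : (0:ℝ) < (1/4) ^ N)]; ring)
      (by
        rw [abs_mul, hD2, hw2, abs_of_pos (by positivity : (0:ℝ) < (1/16) ^ N), mul_pow, ← pow_mul,
          mul_comm N 2, pow_mul]
        norm_num
        ring)
    refine le_csSup (oscSet_bdd hn hO u hu.continuous)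
      ⟨Phi z (fun i => D i * w i ^ N) (fun _ => 1/2), r * (1/4) ^ N, by positivity, ?_, ?_⟩
    · rw [← hcube]
      exact hbox.trans hsub
    · rw [← hcube, average_box _ _ hne, average_box _ _ hne]
  have hW : ∀ i, L2norm (OmegaT n T) ((Dd i)^[M i] u) ≤ sobNorm m (OmegaT n T) u := by
    intro i
    refine Fin.lastCases ?_ (fun i => ?_) i
    · rw [hM2]; exact L2_time_le _ _
    · rw [hM1]; exact L2_space_le _ _ _
  obtain ⟨N, hN1, hN2⟩ := log_choice (sobNorm m (OmegaT n T) u)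
  have hcore := core_est hmn' k M hM C hC hk w hw hwM hwp hO (isOpen_OmegaT n T).measurableSet u hu
    z D hD0 hDle hsub _ _ hb hW N
  rw [hDA, ← hK2] at hcore
  refine hcore.trans ?_
  have hb0 := pBMO_nonneg (OmegaT n T) u
  have hL0 : 0 ≤ ∫ z in OmegaT n T, |u z| := integral_nonneg fun _ => abs_nonneg _
  have hl0 : 0 ≤ logPlus (sobNorm m (OmegaT n T) u) := le_max_right _ _
  generalize pBMO (OmegaT n T) u = b at *
  generalize (∫ z in OmegaT n T, |u z|) = I at *
  generalize sobNorm m (OmegaT n T) u = W at *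
  generalize logPlus W = l at *
  have t2 : K2 * W / 2 ^ N ≤ K2 * (1 + (b + I) * (1 + l)) := by
    rw [mul_div_assoc]
    refine mul_le_mul_of_nonneg_left ?_ hK20.le
    have : W / 2 ^ N ≤ 1 := (div_le_one (by positivity)).2 hN1
    have : 0 ≤ (b + I) * (1 + l) := by positivity
    linarith
  have hAi : 0 ≤ A⁻¹ := by positivity
  have t1 : b + A⁻¹ * I + N * (4 ^ (n+2) * b) ≤
      (1 + A⁻¹ + 2 * 4 ^ (n+2)) * (1 + (b + I) * (1 + l)) := by
    have hX1 : b ≤ 1 + (b + I) * (1 + l) := by nlinarith [mul_nonneg (add_nonneg hb0 hL0) hl0]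
    have hX2 : I ≤ 1 + (b + I) * (1 + l) := by nlinarith [mul_nonneg (add_nonneg hb0 hL0) hl0]
    have hX3 : (1 + l) * b ≤ 1 + (b + I) * (1 + l) := by nlinarith [mul_nonneg hL0 hl0]
    have q2 : A⁻¹ * I ≤ A⁻¹ * (1 + (b + I) * (1 + l)) := mul_le_mul_of_nonneg_left hX2 hAi
    have q3 : (N : ℝ) * (4 ^ (n+2) * b) ≤ 2 * 4 ^ (n+2) * (1 + (b + I) * (1 + l)) := by
      calc (N : ℝ) * (4 ^ (n+2) * b) ≤ (2 * (1 + l)) * (4 ^ (n+2) * b) :=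
            mul_le_mul_of_nonneg_right hN2 (by positivity)
        _ = 2 * 4 ^ (n+2) * ((1 + l) * b) := by ring
        _ ≤ _ := mul_le_mul_of_nonneg_left hX3 (by positivity)
    linarith
  have t3 := mul_le_mul_of_nonneg_left t1 hC0.le
  linarith

lemma exists_extension {n : ℕ} {O V : Set (PSpace n)} (hO : Bornology.IsBounded O) (hV : IsOpen V)
    (hOV : closure O ⊆ V) (u : PSpace n → ℝ) (hu : ContDiffOn ℝ (⊤ : ℕ∞) u V) :
    ∃ v : PSpace n → ℝ, ContDiff ℝ (⊤ : ℕ∞) v ∧ Set.EqOn u v O := by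
  obtain ⟨V', hV'o, hOV', hV'V⟩ := normal_exists_closure_subset isClosed_closure hV hOV
  obtain ⟨f, hf1, hf2, -⟩ := exists_contMDiffMap_zero_one_of_isClosed (n := (⊤ : ℕ∞))
    (modelWithCornersSelf ℝ (PSpace n)) (s := V'ᶜ) (t := closure O) hV'o.isClosed_compl
    isClosed_closure (Set.disjoint_left.2 fun x hx hx' => hx (hOV' hx'))
  refine ⟨fun x => f x * u x, ?_, ?_⟩
  · have hfs : ContDiff ℝ (⊤ : ℕ∞) (f : PSpace n → ℝ) := f.contMDiff.contDiff
    rw [contDiff_iff_contDiffAt]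
    intro x
    by_cases hx : x ∈ V
    · exact hfs.contDiffAt.mul (hu.contDiffAt (hV.mem_nhds hx))
    · have hx' : x ∈ (closure V')ᶜ := fun h => hx (hV'V h)
      have : (fun x => f x * u x) =ᶠ[nhds x] fun _ => 0 := by
        filter_upwards [isClosed_closure.isOpen_compl.mem_nhds hx'] with y hy
        have : f y = 0 := hf1 (fun h => hy (subset_closure h))
        rw [this, zero_mul]
      exact contDiffAt_const.congr_of_eventuallyEq this
  · intro x hx
    have : f x = 1 := hf2 (subset_closure hx)
    simp [this]


/-- **Parabolic logarithmic Sobolev inequality on the bounded domain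
`Ω_T = (0,1)ⁿ × (0,T)`** (Theorem 1.2), for functions smooth on a neighborhood of the
closure of `Ω_T`. -/
theorem parabolic_log_sobolev_inequality_bounded (n m : ℕ) (hn : 1 ≤ n) (hm : 0 < m)
    (hmn : ((n : ℝ) + 2) / 4 < m) (T : ℝ) (hT : 0 < T) :
    ∃ C : ℝ, 0 < C ∧ ∀ (u : PSpace n → ℝ) (V : Set (PSpace n)),
      IsOpen V → closure (OmegaT n T) ⊆ V → ContDiffOn ℝ (⊤ : ℕ∞) u V →
      (⨆ z ∈ OmegaT n T, |u z|) ≤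
        C * (1 + (pBMO (OmegaT n T) u + ∫ z in OmegaT n T, |u z|) *
          (1 + logPlus (sobNorm m (OmegaT n T) u))) := by
  obtain ⟨C, hC, h⟩ := smooth_case n m hn hm hmn T hT
  refine ⟨C, hC, fun u V hV hOV hu => ?_⟩
  obtain ⟨v, hv, he⟩ := exists_extension (isBounded_OmegaT n T) hV hOV u hu
  have hb0 := pBMO_nonneg (OmegaT n T) u
  have hL0 : 0 ≤ ∫ z in OmegaT n T, |u z| := integral_nonneg fun _ => abs_nonneg _
  have hl0 : 0 ≤ logPlus (sobNorm m (OmegaT n T) u) := le_max_right _ _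
  have hR : 0 ≤ C * (1 + (pBMO (OmegaT n T) u + ∫ z in OmegaT n T, |u z|) *
          (1 + logPlus (sobNorm m (OmegaT n T) u))) := by positivity
  refine Real.iSup_le (fun z => Real.iSup_le (fun hz => ?_) hR) hR
  have h1 := h v hv z hz
  have eI : ∫ z in OmegaT n T, |u z| = ∫ z in OmegaT n T, |v z| :=
    setIntegral_congr_fun (isOpen_OmegaT n T).measurableSet fun w hw => by
      show |u w| = |v w|
      rw [he hw]
  rw [pBMO_congr hn he, sobNorm_congr (isOpen_OmegaT n T) he, eI, he hz]
  exact h1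

end
end
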